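/- arXiv:0806.1917 — 2 statements merged into one kernel-verified Lean document; each statement's English description precedes it below -/
import Mathlib

section
/- Let M = (M_0, M_1, M_2, …) be an increasing sequence of positive real numbers with M_0 = 1 that is logarithmically convex, satisfies lim_{j→∞} (M_j)^{1/j} = ∞, and satisfies sup_{j≥1} (M_{j+1}/M_j)^{1/j} < ∞. Then C^ℝ_M(U) is closed under division by a coordinate: if U ⊆ ℝ^N is open, f ∈ C^ℝ_M(U), a_i ∈ ℝ, and f(x_1, …, x_{i−1}, a_i, x_{i+1}, …, x_N) = 0 for every point of U whose i-th coordinate equals a_i, then there exists h ∈ C^ℝ_M(U) such that f(x) = (x_i − a_i)·h(x) for all x ∈ U. -/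
/-- The `i`-th partial derivative of a function on Euclidean space. -/
noncomputable def pd {ι : Type} [Fintype ι] [DecidableEq ι] {W : Type} [NormedAddCommGroup W]
    [NormedSpace ℝ W] (i : ι) (f : EuclideanSpace ℝ ι → W) : EuclideanSpace ℝ ι → W :=
  fun x => fderiv ℝ f x (EuclideanSpace.single i 1)

/-- The multi-index derivative `D^α f`. -/
noncomputable def mderiv {ι : Type} [Fintype ι] [DecidableEq ι] {W : Type} [NormedAddCommGroup W]
    [NormedSpace ℝ W] (α : ι → ℕ) (f : EuclideanSpace ℝ ι → W) : EuclideanSpace ℝ ι → W :=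
  (Finset.univ : Finset ι).toList.foldr (fun i g => (pd i)^[α i] g) f

/-- Membership in the real Denjoy-Carleman class `C^ℝ_M(U)`: `f` is `C^∞` on `U` and on every
compact `K ⊆ U` there are `A, B > 0` with `|(1/α!) D^α f(x)| ≤ A B^{|α|} M_{|α|}`. -/
def CRM {ι : Type} [Fintype ι] [DecidableEq ι] (M : ℕ → ℝ)
    (U : Set (EuclideanSpace ℝ ι)) (f : EuclideanSpace ℝ ι → ℝ) : Prop :=
  ContDiffOn ℝ (⊤ : ℕ∞) f U ∧
  ∀ K : Set (EuclideanSpace ℝ ι), K ⊆ U → IsCompact K →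
    ∃ A B : ℝ, 0 < A ∧ 0 < B ∧ ∀ x ∈ K, ∀ α : ι → ℕ,
      (1 / (∏ i, ((α i).factorial : ℝ))) * |mderiv α f x| ≤
        A * B ^ (∑ i, α i) * M (∑ i, α i)

/-!
On a neighbourhood of a point of the hyperplane `x_i = a`, let `p_t` be the contraction of ratio `t`
onto the hyperplane. The quotient is Hadamard's integral `h(x) = ∫₀¹ ∂_i f(p_t x) dt`, hence smooth.

Write `F_α`, `H_α` for the Taylor coefficients of `f` and `h`. Leibniz' rule for `f = (x_i - a) h`
reads `F_{α+e_i} = (x_i - a) H_{α+e_i} + H_α`. Along the contraction this says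
`d/dt (t^(α_i+1) H_α(p_t x)) = (α_i+1) t^(α_i) F_{α+e_i}(p_t x)`, so near the hyperplane `|H_α|` is
at most a bound for `|F_{α+e_i}|`; the lost derivative is absorbed by `M_{j+1} ≤ C^(j+1) M_j`. Away
from the hyperplane the same identity is a recursion that divides by `x_i - a`, at the cost of
enlarging `B`.
-/

open Set Filter Topology
open scoped ContDiff

section ParametricIntegral

section Continuity

variable {X G : Type*} [TopologicalSpace X] [NormedAddCommGroup G] {Ω : Set (X × ℝ)} {s : Set X}
  {F : X × ℝ → G} {b c : ℝ} {x : X}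

lemma continuousOn_prodMk_right_uIcc (hsΩ : s ×ˢ uIcc b c ⊆ Ω) (hF : ContinuousOn F Ω)
    (hx : x ∈ s) : ContinuousOn (fun t => F (x, t)) (uIcc b c) :=
  hF.comp (by fun_prop) fun _ ht => hsΩ ⟨hx, ht⟩

lemma aestronglyMeasurable_prodMk_right_uIoc (hsΩ : s ×ˢ uIcc b c ⊆ Ω) (hF : ContinuousOn F Ω)
    (hx : x ∈ s) : MeasureTheory.AEStronglyMeasurable (fun t => F (x, t))
      (MeasureTheory.volume.restrict (uIoc b c)) :=
  ((continuousOn_prodMk_right_uIcc hsΩ hF hx).mono uIoc_subset_uIcc).aestronglyMeasurable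
    measurableSet_uIoc

variable [LocallyCompactSpace X]

lemma exists_nhds_norm_le_of_continuousOn (hs : IsOpen s) (hsΩ : s ×ˢ uIcc b c ⊆ Ω)
    (hF : ContinuousOn F Ω) (hx : x ∈ s) :
    ∃ v ∈ 𝓝 x, v ⊆ s ∧ ∃ C, ∀ y ∈ v, ∀ t ∈ uIcc b c, ‖F (y, t)‖ ≤ C := by
  obtain ⟨v, hv, hvs, hvc⟩ := local_compact_nhds (hs.mem_nhds hx)
  obtain ⟨C, hC⟩ := (hvc.prod (isCompact_uIcc (a := b) (b := c))).exists_bound_of_continuousOn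
    (hF.mono ((prod_mono_left hvs).trans hsΩ))
  exact ⟨v, hv, hvs, C, fun y hy t ht => hC (y, t) ⟨hy, ht⟩⟩

lemma continuousOn_parametric_intervalIntegral [FirstCountableTopology X] [NormedSpace ℝ G]
    (hΩ : IsOpen Ω) (hs : IsOpen s) (hsΩ : s ×ˢ uIcc b c ⊆ Ω) (hF : ContinuousOn F Ω) :
    ContinuousOn (fun x => ∫ t in b..c, F (x, t)) s := by
  intro x hx
  obtain ⟨v, hv, hvs, C, hC⟩ := exists_nhds_norm_le_of_continuousOn hs hsΩ hF hx
  refine (intervalIntegral.continuousAt_of_dominated_interval (bound := fun _ => C) ?_ ?_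
    intervalIntegrable_const ?_).continuousWithinAt
  · filter_upwards [hv] with y hy
    exact aestronglyMeasurable_prodMk_right_uIoc hsΩ hF (hvs hy)
  · filter_upwards [hv] with y hy
    exact .of_forall fun t ht => hC y hy t (uIoc_subset_uIcc ht)
  · refine .of_forall fun t ht => ?_
    have hcont : ContinuousAt F (x, t) :=
      hF.continuousAt (hΩ.mem_nhds (hsΩ ⟨hx, uIoc_subset_uIcc ht⟩))
    exact hcont.comp (f := fun y => (y, t)) (by fun_prop)

end Continuity

section Differentiability

variable {E G : Type*} [NormedAddCommGroup E] [NormedSpace ℝ E] [LocallyCompactSpace E]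
  [NormedAddCommGroup G] [NormedSpace ℝ G] {Ω : Set (E × ℝ)} {s : Set E} {F : E × ℝ → G}
  {b c : ℝ} {x : E}

lemma hasFDerivAt_parametric_intervalIntegral (hΩ : IsOpen Ω) (hs : IsOpen s)
    (hsΩ : s ×ˢ uIcc b c ⊆ Ω) (hF : ContDiffOn ℝ 1 F Ω) (hx : x ∈ s) :
    HasFDerivAt (fun x => ∫ t in b..c, F (x, t))
      (∫ t in b..c, (fderiv ℝ F (x, t)).comp (.inl ℝ E ℝ)) x := by
  have hF' : ContinuousOn (fun p => (fderiv ℝ F p).comp (.inl ℝ E ℝ)) Ω :=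
    (hF.continuousOn_fderiv_of_isOpen hΩ le_rfl).clm_comp continuousOn_const
  obtain ⟨v, hv, hvs, C, hC⟩ := exists_nhds_norm_le_of_continuousOn hs hsΩ hF' hx
  refine intervalIntegral.hasFDerivAt_integral_of_dominated_of_fderiv_le
    (F' := fun x t => (fderiv ℝ F (x, t)).comp (.inl ℝ E ℝ)) (bound := fun _ => C) hv ?_
    (continuousOn_prodMk_right_uIcc hsΩ hF.continuousOn hx).intervalIntegrable
    (aestronglyMeasurable_prodMk_right_uIoc hsΩ hF' hx) ?_ intervalIntegrable_const ?_
  · filter_upwards [hv] with y hy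
    exact aestronglyMeasurable_prodMk_right_uIoc hsΩ hF.continuousOn (hvs hy)
  · exact .of_forall fun t ht y hy => hC y hy t (uIoc_subset_uIcc ht)
  · refine .of_forall fun t ht y hy => ?_
    have hdiff : DifferentiableAt ℝ F (y, t) :=
      (hF.contDiffAt (hΩ.mem_nhds (hsΩ ⟨hvs hy, uIoc_subset_uIcc ht⟩))).differentiableAt (by simp)
    exact hdiff.hasFDerivAt.comp y (hasFDerivAt_prodMk_left y t)

end Differentiability

section Smoothness

universe u

-- One universe for `E` and `G`, because the induction on the order replaces `G` by `E →L[ℝ] G`.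
variable {E G : Type u} [NormedAddCommGroup E] [NormedSpace ℝ E] [LocallyCompactSpace E]
  [NormedAddCommGroup G] [NormedSpace ℝ G] {Ω : Set (E × ℝ)} {s : Set E} {F : E × ℝ → G}
  {b c : ℝ}

lemma contDiffOn_nat_parametric_intervalIntegral (hΩ : IsOpen Ω) (hs : IsOpen s)
    (hsΩ : s ×ˢ uIcc b c ⊆ Ω) {n : ℕ} (hF : ContDiffOn ℝ n F Ω) :
    ContDiffOn ℝ n (fun x => ∫ t in b..c, F (x, t)) s := by
  induction n generalizing G with
  | zero =>
    exact contDiffOn_zero.2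
      (continuousOn_parametric_intervalIntegral hΩ hs hsΩ (contDiffOn_zero.1 hF))
  | succ n ih =>
    have hF' : ContDiffOn ℝ n (fun p => (fderiv ℝ F p).comp (.inl ℝ E ℝ)) Ω :=
      (hF.fderiv_of_isOpen hΩ (by simp)).clm_comp contDiffOn_const
    have hderiv := fun x (hx : x ∈ s) => hasFDerivAt_parametric_intervalIntegral hΩ hs hsΩ
      (hF.of_le (by simp)) hx
    rw [Nat.cast_add, Nat.cast_one,
      contDiffOn_succ_iff_hasFDerivWithinAt_of_uniqueDiffOn hs.uniqueDiffOn]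
    exact ⟨by simp, _, ih hF', fun x hx => (hderiv x hx).hasFDerivWithinAt⟩

lemma contDiffOn_infty_parametric_intervalIntegral (hΩ : IsOpen Ω) (hs : IsOpen s)
    (hsΩ : s ×ˢ uIcc b c ⊆ Ω) (hF : ContDiffOn ℝ ∞ F Ω) :
    ContDiffOn ℝ ∞ (fun x => ∫ t in b..c, F (x, t)) s :=
  contDiffOn_infty.2 fun n =>
    contDiffOn_nat_parametric_intervalIntegral hΩ hs hsΩ (contDiffOn_infty.1 hF n)

end Smoothness

end ParametricIntegral

section MultiIndex

variable {ι : Type*} [DecidableEq ι]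

lemma single_one_le {α : ι → ℕ} {i : ι} (h : α i ≠ 0) : Pi.single i 1 ≤ α := by
  simpa [Pi.single, update_le_iff] using Nat.one_le_iff_ne_zero.2 h

lemma multiIndex_induction [Finite ι] {P : (ι → ℕ) → Prop} (zero : P 0)
    (add_single : ∀ α i, P α → P (α + Pi.single i 1)) (α : ι → ℕ) : P α := by
  cases nonempty_fintype ι
  have single (i : ι) (n : ℕ) (β : ι → ℕ) (hβ : P β) : P (β + Pi.single i n) := by
    induction n with
    | zero => simpa using hβ
    | succ n ih => simpa only [Pi.single_add, ← add_assoc] using add_single _ i ih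
  have sum : ∀ β, P β → P (β + ∑ i, Pi.single i (α i)) :=
    Finset.sum_induction _ (fun γ => ∀ β, P β → P (β + γ))
      (fun γ δ hγ hδ β hβ => add_assoc β γ δ ▸ hδ _ (hγ β hβ)) (by simp) fun i _ => single i _
  simpa only [Finset.univ_sum_single, zero_add] using sum 0 zero

variable [Fintype ι]

lemma sum_add_single (α : ι → ℕ) (i : ι) :
    ∑ k, (α + Pi.single i 1 : ι → ℕ) k = ∑ k, α k + 1 := by
  simp [Finset.sum_add_distrib]

lemma prod_factorial_add_single (α : ι → ℕ) (i : ι) :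
    ∏ k, ((α + Pi.single i 1 : ι → ℕ) k).factorial = (α i + 1) * ∏ k, (α k).factorial := by
  have hfactor (k : ι) : ((α + Pi.single i 1 : ι → ℕ) k).factorial =
      (if k = i then α i + 1 else 1) * (α k).factorial := by
    split_ifs with hk
    · subst hk
      simp [Nat.factorial_succ]
    · simp [hk]
  simp only [hfactor, Finset.prod_mul_distrib, Finset.prod_ite_eq', Finset.mem_univ, if_true]

end MultiIndex

section Derivatives

variable {ι : Type} [Fintype ι] {W : Type} [NormedAddCommGroup W]
  [NormedSpace ℝ W] {U : Set (EuclideanSpace ℝ ι)} {f g h : EuclideanSpace ℝ ι → W}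
  {x : EuclideanSpace ℝ ι} {a : ℝ} {i : ι} {α : ι → ℕ}

lemma differentiableAt_of_contDiffOn_infty (hU : IsOpen U) (hf : ContDiffOn ℝ ∞ f U)
    (hx : x ∈ U) : DifferentiableAt ℝ f x :=
  (hf.contDiffAt (hU.mem_nhds hx)).differentiableAt (by simp)

lemma contDiff_coord_sub (i : ι) (a : ℝ) :
    ContDiff ℝ ∞ fun x : EuclideanSpace ℝ ι => x i - a :=
  (EuclideanSpace.proj i : EuclideanSpace ℝ ι →L[ℝ] ℝ).contDiff.sub contDiff_const

variable [DecidableEq ι]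

lemma eqOn_pd (hU : IsOpen U) (hfg : EqOn f g U) (i : ι) : EqOn (pd i f) (pd i g) U :=
  fun x hx => by rw [pd, pd, (hfg.eventuallyEq_of_mem (hU.mem_nhds hx)).fderiv_eq]

lemma eqOn_iterate_pd (hU : IsOpen U) (hfg : EqOn f g U) (i : ι) (k : ℕ) :
    EqOn ((pd i)^[k] f) ((pd i)^[k] g) U := by
  induction k with
  | zero => exact hfg
  | succ k ih => simpa only [Function.iterate_succ_apply'] using eqOn_pd hU ih i

lemma pd_add (hf : DifferentiableAt ℝ f x) (hg : DifferentiableAt ℝ g x) (i : ι) :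
    pd i (fun y => f y + g y) x = pd i f x + pd i g x := by
  simp only [pd, fderiv_fun_add hf hg, add_apply]

lemma pd_const_smul (hf : DifferentiableAt ℝ f x) (r : ℝ) (i : ι) :
    pd i (fun y => r • f y) x = r • pd i f x := by
  simp only [pd, fderiv_fun_const_smul hf, smul_apply]

lemma contDiffOn_pd (hU : IsOpen U) (hf : ContDiffOn ℝ ∞ f U) (i : ι) :
    ContDiffOn ℝ ∞ (pd i f) U :=
  (hf.fderiv_of_isOpen hU (by simp)).clm_apply contDiffOn_const

lemma contDiffOn_iterate_pd (hU : IsOpen U) (hf : ContDiffOn ℝ ∞ f U) (i : ι) (k : ℕ) :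
    ContDiffOn ℝ ∞ ((pd i)^[k] f) U := by
  induction k with
  | zero => exact hf
  | succ k ih => simpa only [Function.iterate_succ_apply'] using contDiffOn_pd hU ih i

lemma pd_pd_eq_fderiv_fderiv (hU : IsOpen U) (hf : ContDiffOn ℝ ∞ f U) (hx : x ∈ U) (i j : ι) :
    pd i (pd j f) x =
      fderiv ℝ (fderiv ℝ f) x (EuclideanSpace.single i 1) (EuclideanSpace.single j 1) := by
  have hdiff : DifferentiableAt ℝ (fderiv ℝ f) x :=
    ((hf.fderiv_of_isOpen hU (m := ∞) (by simp)).contDiffAt (hU.mem_nhds hx)).differentiableAt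
      (by simp)
  unfold pd
  rw [fderiv_clm_apply hdiff (differentiableAt_const _)]
  simp

lemma eqOn_pd_comm (hU : IsOpen U) (hf : ContDiffOn ℝ ∞ f U) (i j : ι) :
    EqOn (pd i (pd j f)) (pd j (pd i f)) U := by
  intro x hx
  have hsymm : IsSymmSndFDerivAt ℝ f x :=
    (hf.contDiffAt (hU.mem_nhds hx)).isSymmSndFDerivAt
      (by simpa using WithTop.coe_le_coe.2 (le_top (a := (2 : ℕ∞))))
  rw [pd_pd_eq_fderiv_fderiv hU hf hx, pd_pd_eq_fderiv_fderiv hU hf hx, hsymm.eq]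

lemma eqOn_iterate_pd_comm (hU : IsOpen U) (hf : ContDiffOn ℝ ∞ f U) (i j : ι) (k : ℕ) :
    EqOn ((pd i)^[k] (pd j f)) (pd j ((pd i)^[k] f)) U := by
  induction k with
  | zero => exact fun _ _ => rfl
  | succ k ih =>
    simp only [Function.iterate_succ_apply']
    exact (eqOn_pd hU ih i).trans (eqOn_pd_comm hU (contDiffOn_iterate_pd hU hf i k) i j)

lemma contDiffOn_foldr_pd (hU : IsOpen U) (hf : ContDiffOn ℝ ∞ f U) (α : ι → ℕ) (l : List ι) :
    ContDiffOn ℝ ∞ (l.foldr (fun i g => (pd i)^[α i] g) f) U := by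
  induction l with
  | nil => exact hf
  | cons i l ih => exact contDiffOn_iterate_pd hU ih i _

lemma eqOn_foldr_pd_add_single (hU : IsOpen U) (hf : ContDiffOn ℝ ∞ f U) (α : ι → ℕ) {l : List ι}
    (hl : l.Nodup) {j : ι} (hj : j ∈ l) :
    EqOn (l.foldr (fun i g => (pd i)^[(α + Pi.single j 1 : ι → ℕ) i] g) f)
      (pd j (l.foldr (fun i g => (pd i)^[α i] g) f)) U := by
  induction l with
  | nil => simp at hj
  | cons i l ih =>
    obtain ⟨hil, hl⟩ := List.nodup_cons.1 hl
    simp only [List.foldr_cons]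
    rcases eq_or_ne j i with rfl | hji
    · have htail : l.foldr (fun i g => (pd i)^[(α + Pi.single j 1 : ι → ℕ) i] g) f =
          l.foldr (fun i g => (pd i)^[α i] g) f :=
        List.foldr_ext _ _ _ fun i hi g => by
          simp [Pi.single_eq_of_ne (ne_of_mem_of_not_mem hi hil)]
      rw [htail, Pi.add_apply, Pi.single_eq_same, Function.iterate_succ_apply']
      exact fun _ _ => rfl
    · have hjl : j ∈ l := (List.mem_cons.1 hj).resolve_left hji
      rw [Pi.add_apply, Pi.single_eq_of_ne hji.symm, add_zero]
      exact (eqOn_iterate_pd hU (ih hl hjl) i _).trans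
        (eqOn_iterate_pd_comm hU (contDiffOn_foldr_pd hU hf α l) i j _)

lemma mderiv_zero (f : EuclideanSpace ℝ ι → W) : mderiv 0 f = f :=
  List.foldr_fixed _

lemma contDiffOn_mderiv (hU : IsOpen U) (hf : ContDiffOn ℝ ∞ f U) (α : ι → ℕ) :
    ContDiffOn ℝ ∞ (mderiv α f) U :=
  contDiffOn_foldr_pd hU hf α _

lemma eqOn_mderiv_add_single (hU : IsOpen U) (hf : ContDiffOn ℝ ∞ f U) (α : ι → ℕ) (i : ι) :
    EqOn (mderiv (α + Pi.single i 1) f) (pd i (mderiv α f)) U :=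
  eqOn_foldr_pd_add_single hU hf α (Finset.nodup_toList _) (by simp)

lemma pd_coord_sub_smul (hh : DifferentiableAt ℝ h x) (i j : ι) (a : ℝ) :
    pd j (fun y => (y i - a) • h y) x =
      (x i - a) • pd j h x + (Pi.single j 1 : ι → ℝ) i • h x := by
  have hcoord : HasFDerivAt (fun y : EuclideanSpace ℝ ι => y i - a)
      (EuclideanSpace.proj i : EuclideanSpace ℝ ι →L[ℝ] ℝ) x :=
    (EuclideanSpace.proj i : EuclideanSpace ℝ ι →L[ℝ] ℝ).hasFDerivAt.sub_const a
  rw [pd, (hcoord.fun_smul hh.hasFDerivAt).fderiv]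
  simp [pd, Pi.single_apply]

-- Where the subtraction `α - Pi.single i 1` truncates, its term has the coefficient `α i = 0`.
lemma eqOn_mderiv_coord_sub_smul (hU : IsOpen U) (hh : ContDiffOn ℝ ∞ h U)
    (hfh : EqOn f (fun x => (x i - a) • h x) U) (α : ι → ℕ) :
    EqOn (mderiv α f)
      (fun x => (x i - a) • mderiv α h x + (α i : ℝ) • mderiv (α - Pi.single i 1) h x) U := by
  have hf : ContDiffOn ℝ ∞ f U := ((contDiff_coord_sub i a).contDiffOn.smul hh).congr hfh
  induction α using multiIndex_induction with
  | zero => intro x hx; simp [mderiv_zero, hfh hx]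
  | add_single β j ih =>
    intro x hx
    have hβ := differentiableAt_of_contDiffOn_infty hU (contDiffOn_mderiv hU hh β) hx
    have hβ' := differentiableAt_of_contDiffOn_infty hU
      (contDiffOn_mderiv hU hh (β - Pi.single i 1)) hx
    have hpd : mderiv (β + Pi.single j 1) f x = (x i - a) • mderiv (β + Pi.single j 1) h x +
        (Pi.single j 1 : ι → ℝ) i • mderiv β h x +
          (β i : ℝ) • mderiv (β - Pi.single i 1 + Pi.single j 1) h x := by
      rw [eqOn_mderiv_add_single hU hf β j hx, eqOn_pd hU ih j hx,
        pd_add (((contDiff_coord_sub i a).differentiable (by simp) x).fun_smul hβ)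
          (hβ'.fun_const_smul _), pd_coord_sub_smul hβ, pd_const_smul hβ',
        eqOn_mderiv_add_single hU hh β j hx, eqOn_mderiv_add_single hU hh _ j hx]
    have hcoeff : (((β + Pi.single j 1 : ι → ℕ) i : ℕ) : ℝ) =
        (Pi.single j 1 : ι → ℝ) i + β i := by
      simp [Pi.single_apply, add_comm]
    beta_reduce
    rw [hpd, hcoeff, add_smul, add_assoc]
    congr 2
    · rcases eq_or_ne i j with rfl | hij <;> simp [*]
    · rcases eq_or_ne (β i) 0 with hβi | hβi
      · simp [hβi]
      · rw [tsub_add_eq_add_tsub (single_one_le hβi)]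

end Derivatives

section TaylorCoefficients

variable {ι : Type} [Fintype ι] [DecidableEq ι] {W : Type} [NormedAddCommGroup W]
  [NormedSpace ℝ W]

/-- The Taylor coefficient `(1/α!) D^α f(x)`. In terms of these, the Denjoy-Carleman estimates
carry no factorials. -/
noncomputable def taylorCoeff (α : ι → ℕ) (f : EuclideanSpace ℝ ι → W) :
    EuclideanSpace ℝ ι → W :=
  fun x => ((∏ i, (α i).factorial : ℕ) : ℝ)⁻¹ • mderiv α f x

variable {U : Set (EuclideanSpace ℝ ι)} {f h : EuclideanSpace ℝ ι → W} {x : EuclideanSpace ℝ ι}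
  {a : ℝ} {i : ι} {α : ι → ℕ}

lemma contDiffOn_taylorCoeff (hU : IsOpen U) (hf : ContDiffOn ℝ ∞ f U) (α : ι → ℕ) :
    ContDiffOn ℝ ∞ (taylorCoeff α f) U :=
  (contDiffOn_mderiv hU hf α).const_smul _

lemma inv_prod_factorial_eq_inv_add_single_mul (α : ι → ℕ) (i : ι) :
    ((∏ k, (α k).factorial : ℕ) : ℝ)⁻¹ =
      ((∏ k, ((α + Pi.single i 1 : ι → ℕ) k).factorial : ℕ) : ℝ)⁻¹ * (α i + 1) := by
  have : (α i + 1 : ℝ) ≠ 0 := by positivity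
  rw [prod_factorial_add_single, Nat.cast_mul, Nat.cast_succ]
  field_simp

lemma eqOn_pd_taylorCoeff (hU : IsOpen U) (hf : ContDiffOn ℝ ∞ f U) (α : ι → ℕ) (i : ι) :
    EqOn (pd i (taylorCoeff α f))
      (fun x => (α i + 1 : ℝ) • taylorCoeff (α + Pi.single i 1) f x) U := by
  intro x hx
  have hdiff := differentiableAt_of_contDiffOn_infty hU (contDiffOn_mderiv hU hf α) hx
  unfold taylorCoeff
  beta_reduce
  rw [pd_const_smul hdiff, ← eqOn_mderiv_add_single hU hf α i hx, smul_smul,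
    inv_prod_factorial_eq_inv_add_single_mul α i, mul_comm]

lemma taylorCoeff_add_single_coord_sub_smul (hU : IsOpen U) (hh : ContDiffOn ℝ ∞ h U)
    (hfh : EqOn f (fun x => (x i - a) • h x) U) (α : ι → ℕ) (hx : x ∈ U) :
    taylorCoeff (α + Pi.single i 1) f x =
      (x i - a) • taylorCoeff (α + Pi.single i 1) h x + taylorCoeff α h x := by
  simp only [taylorCoeff]
  rw [eqOn_mderiv_coord_sub_smul hU hh hfh _ hx,
    inv_prod_factorial_eq_inv_add_single_mul α i, smul_add, smul_smul, smul_smul, smul_smul,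
    mul_comm (x i - a), add_tsub_cancel_right]
  simp

lemma taylorCoeff_coord_sub_smul_of_eq_zero (hU : IsOpen U) (hh : ContDiffOn ℝ ∞ h U)
    (hfh : EqOn f (fun x => (x i - a) • h x) U) (hα : α i = 0) (hx : x ∈ U) :
    taylorCoeff α f x = (x i - a) • taylorCoeff α h x := by
  simp only [taylorCoeff]
  rw [eqOn_mderiv_coord_sub_smul hU hh hfh _ hx]
  beta_reduce
  rw [hα, Nat.cast_zero, zero_smul, add_zero, smul_comm]

end TaylorCoefficients

section Contraction

variable {ι : Type} [DecidableEq ι]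

/-- The contraction `(x_1, …, x_i, …, x_N) ↦ (x_1, …, a + t (x_i - a), …, x_N)` of ratio `t` onto
the hyperplane `x_i = a`. -/
noncomputable def contractCoord (i : ι) (a t : ℝ) (x : EuclideanSpace ℝ ι) :
    EuclideanSpace ℝ ι :=
  x + ((t - 1) * (x i - a)) • EuclideanSpace.single i 1

variable {i : ι} {a t : ℝ} {x c : EuclideanSpace ℝ ι}

lemma contractCoord_one (i : ι) (a : ℝ) (x : EuclideanSpace ℝ ι) :
    contractCoord i a 1 x = x := by
  simp [contractCoord]

lemma contractCoord_of_coord_eq (hx : x i = a) (t : ℝ) : contractCoord i a t x = x := by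
  simp [contractCoord, hx]

lemma contractCoord_coord_sub (i : ι) (a t : ℝ) (x : EuclideanSpace ℝ ι) :
    contractCoord i a t x i - a = t * (x i - a) := by
  simp only [contractCoord, PiLp.add_apply, PiLp.smul_apply, PiLp.single_eq_same, smul_eq_mul,
    mul_one]
  ring

variable [Fintype ι]

lemma dist_contractCoord_le (ht : t ∈ Icc (0 : ℝ) 1) (hc : c i = a) (x : EuclideanSpace ℝ ι) :
    dist (contractCoord i a t x) c ≤ dist x c := by
  rw [EuclideanSpace.dist_eq, EuclideanSpace.dist_eq]
  gcongr with j
  rcases eq_or_ne j i with rfl | hj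
  · rw [Real.dist_eq, Real.dist_eq, hc, contractCoord_coord_sub, abs_mul, abs_of_nonneg ht.1]
    exact mul_le_of_le_one_left (abs_nonneg _) ht.2
  · simp [contractCoord, hj]

lemma contDiff_contractCoord (i : ι) (a : ℝ) :
    ContDiff ℝ ∞ fun p : EuclideanSpace ℝ ι × ℝ => contractCoord i a p.2 p.1 :=
  contDiff_fst.add <| ((contDiff_snd.sub contDiff_const).mul
    ((contDiff_coord_sub i a).comp contDiff_fst)).fun_smul contDiff_const

lemma hasDerivAt_contractCoord (i : ι) (a t : ℝ) (x : EuclideanSpace ℝ ι) :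
    HasDerivAt (fun t => contractCoord i a t x) ((x i - a) • EuclideanSpace.single i 1) t := by
  have hcoeff : HasDerivAt (fun t : ℝ => (t - 1) * (x i - a)) (x i - a) t := by
    simpa using ((hasDerivAt_id t).sub_const 1).mul_const (x i - a)
  exact (hcoeff.smul_const _).const_add x

variable {W : Type} [NormedAddCommGroup W] [NormedSpace ℝ W] {f : EuclideanSpace ℝ ι → W}
  {U : Set (EuclideanSpace ℝ ι)}

lemma hasDerivAt_comp_contractCoord (hf : DifferentiableAt ℝ f (contractCoord i a t x)) :
    HasDerivAt (fun t => f (contractCoord i a t x))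
      ((x i - a) • pd i f (contractCoord i a t x)) t := by
  simpa [pd, Function.comp_def] using
    hf.hasFDerivAt.comp_hasDerivAt t (hasDerivAt_contractCoord i a t x)

lemma integral_pd_contractCoord [CompleteSpace W] (hU : IsOpen U) (hf : ContDiffOn ℝ ∞ f U)
    (hx : ∀ t ∈ Icc (0 : ℝ) 1, contractCoord i a t x ∈ U) :
    (x i - a) • ∫ t in (0 : ℝ)..1, pd i f (contractCoord i a t x) =
      f x - f (contractCoord i a 0 x) := by
  rw [← uIcc_of_le zero_le_one] at hx
  have hcont : ContinuousOn (fun t => pd i f (contractCoord i a t x)) (uIcc 0 1) :=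
    (contDiffOn_pd hU hf i).continuousOn.comp
      ((contDiff_contractCoord i a).continuous.comp (Continuous.prodMk_right x)).continuousOn hx
  rw [← intervalIntegral.integral_smul, intervalIntegral.integral_eq_sub_of_hasDerivAt
    (fun t ht => hasDerivAt_comp_contractCoord
      (differentiableAt_of_contDiffOn_infty hU hf (hx t ht)))
    (hcont.const_smul _).intervalIntegrable, contractCoord_one]

end Contraction

section Quotient

variable {ι : Type} [Fintype ι] [DecidableEq ι] {W : Type} [NormedAddCommGroup W]
  [NormedSpace ℝ W]

/-- The quotient of `f` by `x_i - a`, extended by `∂f/∂x_i` to the hyperplane `x_i = a`, as is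
appropriate when `f` vanishes there. -/
noncomputable def coordQuotient (i : ι) (a : ℝ) (f : EuclideanSpace ℝ ι → W) :
    EuclideanSpace ℝ ι → W :=
  fun x => if x i = a then pd i f x else (x i - a)⁻¹ • f x

variable {U : Set (EuclideanSpace ℝ ι)} {f : EuclideanSpace ℝ ι → W} {x : EuclideanSpace ℝ ι}
  {a : ℝ} {i : ι}

lemma eq_coord_sub_smul_coordQuotient (hx : x i = a → f x = 0) :
    f x = (x i - a) • coordQuotient i a f x := by
  unfold coordQuotient
  split_ifs with hxa
  · rw [hx hxa, hxa, sub_self, zero_smul]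
  · rw [smul_inv_smul₀ (sub_ne_zero.2 hxa)]

lemma coordQuotient_eq_integral [CompleteSpace W] (hU : IsOpen U) (hf : ContDiffOn ℝ ∞ f U)
    (hvanish : ∀ x ∈ U, x i = a → f x = 0)
    (hx : ∀ t ∈ Icc (0 : ℝ) 1, contractCoord i a t x ∈ U) :
    coordQuotient i a f x = ∫ t in (0 : ℝ)..1, pd i f (contractCoord i a t x) := by
  unfold coordQuotient
  split_ifs with hxa
  · simp [contractCoord_of_coord_eq hxa]
  · have hfoot : f (contractCoord i a 0 x) = 0 :=
      hvanish _ (hx 0 (by simp)) (sub_eq_zero.1 (by simp [contractCoord_coord_sub]))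
    rw [inv_smul_eq_iff₀ (sub_ne_zero.2 hxa), integral_pd_contractCoord hU hf hx, hfoot, sub_zero]

lemma contDiffOn_coordQuotient_of_mapsTo [CompleteSpace W] (hU : IsOpen U)
    (hf : ContDiffOn ℝ ∞ f U) (hvanish : ∀ x ∈ U, x i = a → f x = 0)
    (hstar : ∀ x ∈ U, ∀ t ∈ Icc (0 : ℝ) 1, contractCoord i a t x ∈ U) :
    ContDiffOn ℝ ∞ (coordQuotient i a f) U := by
  have hcontract := contDiff_contractCoord (ι := ι) i a
  have hintegral : ContDiffOn ℝ ∞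
      (fun x => ∫ t in (0 : ℝ)..1, pd i f (contractCoord i a t x)) U := by
    refine contDiffOn_infty_parametric_intervalIntegral
      (F := fun p => pd i f (contractCoord i a p.2 p.1)) (hU.preimage hcontract.continuous) hU ?_
      ((contDiffOn_pd hU hf i).comp hcontract.contDiffOn fun _ hp => hp)
    rintro ⟨x, t⟩ ⟨hx, ht⟩
    exact hstar x hx t (by rwa [uIcc_of_le zero_le_one] at ht)
  exact hintegral.congr fun x hx => coordQuotient_eq_integral hU hf hvanish (hstar x hx)

lemma contDiffAt_coordQuotient_of_ne (hf : ContDiffAt ℝ ∞ f x) (hx : x i ≠ a) :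
    ContDiffAt ℝ ∞ (coordQuotient i a f) x := by
  have hcoord := (contDiff_coord_sub (ι := ι) i a).contDiffAt (x := x)
  refine ((hcoord.inv (sub_ne_zero.2 hx)).smul hf).congr_of_eventuallyEq ?_
  filter_upwards [hcoord.continuousAt.eventually_ne (sub_ne_zero.2 hx)] with y hy
  exact if_neg (sub_ne_zero.1 hy)

lemma contDiffOn_coordQuotient [CompleteSpace W] (hU : IsOpen U) (hf : ContDiffOn ℝ ∞ f U)
    (hvanish : ∀ x ∈ U, x i = a → f x = 0) : ContDiffOn ℝ ∞ (coordQuotient i a f) U := by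
  intro x hx
  refine ContDiffAt.contDiffWithinAt ?_
  rcases eq_or_ne (x i) a with hxa | hxa
  · obtain ⟨ε, hε, hball⟩ := Metric.isOpen_iff.1 hU x hx
    exact (contDiffOn_coordQuotient_of_mapsTo Metric.isOpen_ball (hf.mono hball)
      (fun y hy => hvanish y (hball hy))
      fun y hy t ht => (dist_contractCoord_le ht hxa y).trans_lt hy).contDiffAt
        (Metric.ball_mem_nhds x hε)
  · exact contDiffAt_coordQuotient_of_ne (hf.contDiffAt (hU.mem_nhds hx)) hxa

end Quotient

section PointwiseBounds

variable {ι : Type} [Fintype ι] [DecidableEq ι] {W : Type} [NormedAddCommGroup W]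
  [NormedSpace ℝ W] {U : Set (EuclideanSpace ℝ ι)} {f h : EuclideanSpace ℝ ι → W}
  {x : EuclideanSpace ℝ ι} {a t : ℝ} {i : ι} {α : ι → ℕ} {M : ℕ → ℝ}

lemma hasDerivAt_pow_smul_taylorCoeff_contractCoord (hU : IsOpen U) (hh : ContDiffOn ℝ ∞ h U)
    (hfh : EqOn f (fun x => (x i - a) • h x) U) (α : ι → ℕ) (hx : contractCoord i a t x ∈ U) :
    HasDerivAt (fun t => t ^ (α i + 1) • taylorCoeff α h (contractCoord i a t x))
      (((α i + 1) * t ^ α i) • taylorCoeff (α + Pi.single i 1) f (contractCoord i a t x)) t := by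
  have hcomp := hasDerivAt_comp_contractCoord
    (differentiableAt_of_contDiffOn_infty hU (contDiffOn_taylorCoeff hU hh α) hx)
  refine ((hasDerivAt_pow (α i + 1) t).fun_smul hcomp).congr_deriv ?_
  rw [eqOn_pd_taylorCoeff hU hh α i hx, taylorCoeff_add_single_coord_sub_smul hU hh hfh α hx,
    contractCoord_coord_sub]
  push_cast
  module

lemma norm_taylorCoeff_le_of_contractCoord (hU : IsOpen U) (hh : ContDiffOn ℝ ∞ h U)
    (hfh : EqOn f (fun x => (x i - a) • h x) U)
    (hx : ∀ t ∈ Icc (0 : ℝ) 1, contractCoord i a t x ∈ U) {S : ℝ}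
    (hS : ∀ t ∈ Icc (0 : ℝ) 1,
      ‖taylorCoeff (α + Pi.single i 1) f (contractCoord i a t x)‖ ≤ S) :
    ‖taylorCoeff α h x‖ ≤ S := by
  have hderiv := fun t (ht : t ∈ Icc (0 : ℝ) 1) =>
    hasDerivAt_pow_smul_taylorCoeff_contractCoord hU hh hfh α (hx t ht)
  have hmajorant (t : ℝ) :
      HasDerivAt (fun t => S * t ^ (α i + 1)) (S * ((α i + 1) * t ^ α i)) t := by
    simpa using (hasDerivAt_pow (α i + 1) t).const_mul S
  have hle := image_norm_le_of_norm_deriv_right_le_deriv_boundary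
    (fun t ht => (hderiv t ht).continuousAt.continuousWithinAt)
    (fun t ht => (hderiv t (Ico_subset_Icc_self ht)).hasDerivWithinAt) (by simp) hmajorant
    (fun t ht => ?_) (right_mem_Icc.2 zero_le_one)
  · simpa [contractCoord_one] using hle
  · have hweight : 0 ≤ (α i + 1) * t ^ α i := mul_nonneg (by positivity) (pow_nonneg ht.1 _)
    rw [norm_smul, Real.norm_of_nonneg hweight, mul_comm]
    exact mul_le_mul_of_nonneg_right (hS t (Ico_subset_Icc_self ht)) hweight

lemma mul_norm_taylorCoeff_le_of_eq_zero (hU : IsOpen U) (hh : ContDiffOn ℝ ∞ h U)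
    (hfh : EqOn f (fun x => (x i - a) • h x) U) (hx : x ∈ U) {δ : ℝ} (hδ : δ ≤ |x i - a|)
    (hα : α i = 0) : δ * ‖taylorCoeff α h x‖ ≤ ‖taylorCoeff α f x‖ := by
  rw [taylorCoeff_coord_sub_smul_of_eq_zero hU hh hfh hα hx, norm_smul, Real.norm_eq_abs]
  gcongr

lemma mul_norm_taylorCoeff_add_single_le (hU : IsOpen U) (hh : ContDiffOn ℝ ∞ h U)
    (hfh : EqOn f (fun x => (x i - a) • h x) U) (hx : x ∈ U) {δ : ℝ} (hδ : δ ≤ |x i - a|)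
    (α : ι → ℕ) : δ * ‖taylorCoeff (α + Pi.single i 1) h x‖ ≤
      ‖taylorCoeff (α + Pi.single i 1) f x‖ + ‖taylorCoeff α h x‖ := by
  calc δ * ‖taylorCoeff (α + Pi.single i 1) h x‖
      ≤ ‖(x i - a) • taylorCoeff (α + Pi.single i 1) h x‖ := by
        rw [norm_smul, Real.norm_eq_abs]
        gcongr
    _ = ‖taylorCoeff (α + Pi.single i 1) f x - taylorCoeff α h x‖ := by
        rw [taylorCoeff_add_single_coord_sub_smul hU hh hfh α hx, add_sub_cancel_right]
    _ ≤ _ := norm_sub_le _ _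

lemma norm_taylorCoeff_le_of_le_abs_coord_sub (hU : IsOpen U) (hh : ContDiffOn ℝ ∞ h U)
    (hfh : EqOn f (fun x => (x i - a) • h x) U) (hx : x ∈ U) (hM : ∀ n, 0 ≤ M n)
    (hmono : Monotone M) {δ A B : ℝ} (hδ : 0 < δ) (hA : 0 ≤ A) (hB : 0 ≤ B)
    (hxδ : δ ≤ |x i - a|)
    (hf : ∀ α, ‖taylorCoeff α f x‖ ≤ A * B ^ (∑ k, α k) * M (∑ k, α k)) (α : ι → ℕ) :
    ‖taylorCoeff α h x‖ ≤ A / δ * (B + 1 / δ) ^ (∑ k, α k) * M (∑ k, α k) := by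
  have hBD : B ≤ B + 1 / δ := le_add_of_nonneg_right (by positivity)
  suffices hsuff : δ * ‖taylorCoeff α h x‖ ≤ A * (B + 1 / δ) ^ (∑ k, α k) * M (∑ k, α k) by
    rwa [mul_assoc, div_mul_eq_mul_div, le_div_iff₀' hδ, ← mul_assoc]
  induction hk : α i generalizing α with
  | zero =>
    refine (mul_norm_taylorCoeff_le_of_eq_zero hU hh hfh hx hxδ hk).trans ((hf α).trans ?_)
    have hn := hM (∑ k, α k)
    gcongr
  | succ k ih =>
    obtain ⟨β, rfl⟩ : ∃ β : ι → ℕ, α = β + Pi.single i 1 :=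
      ⟨_, (tsub_add_cancel_of_le (single_one_le (hk.trans_ne k.succ_ne_zero))).symm⟩
    have hβ := ih β (by simpa using hk)
    have hα := hf (β + Pi.single i 1)
    rw [sum_add_single] at hα ⊢
    generalize ∑ k, β k = n at hα hβ ⊢
    have hn := hM (n + 1)
    calc δ * ‖taylorCoeff (β + Pi.single i 1) h x‖
        ≤ A * B ^ (n + 1) * M (n + 1) + A * (B + 1 / δ) ^ n * M n / δ :=
          (mul_norm_taylorCoeff_add_single_le hU hh hfh hx hxδ β).trans
            (add_le_add hα ((le_div_iff₀' hδ).2 hβ))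
      _ ≤ A * ((B + 1 / δ) ^ n * B) * M (n + 1) + A * (B + 1 / δ) ^ n * M (n + 1) / δ := by
          rw [pow_succ]
          gcongr
          exact hmono n.le_succ
      _ = A * (B + 1 / δ) ^ (n + 1) * M (n + 1) := by ring

end PointwiseBounds

section DenjoyCarleman

variable {ι : Type} [Fintype ι] [DecidableEq ι] {W : Type} [NormedAddCommGroup W]
  [NormedSpace ℝ W]

/-- The Denjoy-Carleman estimates for `f`, with weight sequence `M`, uniformly on the set `s`. -/
def DCBoundOn (M : ℕ → ℝ) (f : EuclideanSpace ℝ ι → W) (s : Set (EuclideanSpace ℝ ι)) : Prop :=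
  ∃ A B : ℝ, 0 < A ∧ 0 < B ∧
    ∀ x ∈ s, ∀ α : ι → ℕ, ‖taylorCoeff α f x‖ ≤ A * B ^ (∑ k, α k) * M (∑ k, α k)

variable {M : ℕ → ℝ} {U s t K : Set (EuclideanSpace ℝ ι)} {f h : EuclideanSpace ℝ ι → W}
  {x : EuclideanSpace ℝ ι} {a : ℝ} {i : ι}

lemma crm_iff {g : EuclideanSpace ℝ ι → ℝ} :
    CRM M U g ↔ ContDiffOn ℝ ∞ g U ∧ ∀ K ⊆ U, IsCompact K → DCBoundOn M g K := by
  simp only [CRM, DCBoundOn, taylorCoeff, norm_smul, norm_inv, ← Nat.cast_prod,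
    Real.norm_eq_abs, Nat.abs_cast, one_div]

lemma DCBoundOn.mono (hst : s ⊆ t) (hf : DCBoundOn M f t) : DCBoundOn M f s := by
  obtain ⟨A, B, hA, hB, hbound⟩ := hf
  exact ⟨A, B, hA, hB, fun x hx => hbound x (hst hx)⟩

lemma DCBoundOn.union (hM : ∀ n, 0 ≤ M n) (hs : DCBoundOn M f s) (ht : DCBoundOn M f t) :
    DCBoundOn M f (s ∪ t) := by
  obtain ⟨A, B, hA, hB, hs⟩ := hs
  obtain ⟨A', B', hA', hB', ht⟩ := ht
  refine ⟨A + A', B + B', by positivity, by positivity, ?_⟩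
  rintro x (hx | hx) α <;> have hn := hM (∑ k, α k)
  · exact (hs x hx α).trans (by gcongr <;> linarith)
  · exact (ht x hx α).trans (by gcongr <;> linarith)

lemma dcBoundOn_of_isCompact (hM : ∀ n, 0 ≤ M n) (hK : IsCompact K)
    (hlocal : ∀ x ∈ K, ∃ v ∈ 𝓝 x, DCBoundOn M f v) : DCBoundOn M f K := by
  refine hK.induction_on ⟨1, 1, one_pos, one_pos, by simp⟩ (fun _ _ => DCBoundOn.mono)
    (fun _ _ => DCBoundOn.union hM) fun x hx => ?_
  obtain ⟨v, hv, hbound⟩ := hlocal x hx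
  exact ⟨v, mem_nhdsWithin_of_mem_nhds hv, hbound⟩

lemma exists_succ_le_pow_mul (hpos : ∀ j, 0 < M j)
    (hder : ∃ C : ℝ, ∀ j : ℕ, 1 ≤ j → (M (j + 1) / M j) ^ ((1 : ℝ) / j) ≤ C) :
    ∃ C, 0 < C ∧ ∀ j, M (j + 1) ≤ C ^ (j + 1) * M j := by
  obtain ⟨C, hC⟩ := hder
  let D := max 1 (max C (M 1 / M 0))
  have hD : 1 ≤ D := le_max_left _ _
  refine ⟨D, one_pos.trans_le hD, fun j => (div_le_iff₀ (hpos j)).1 ?_⟩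
  rcases j.eq_zero_or_pos with rfl | hj
  · simp [D]
  · have hratio : 0 ≤ M (j + 1) / M j := (div_pos (hpos _) (hpos j)).le
    calc M (j + 1) / M j = ((M (j + 1) / M j) ^ ((1 : ℝ) / j)) ^ j := by
          rw [one_div, Real.rpow_inv_natCast_pow hratio hj.ne']
      _ ≤ D ^ j := pow_le_pow_left₀ (Real.rpow_nonneg hratio _)
          ((hC j hj).trans ((le_max_left C _).trans (le_max_right 1 _))) j
      _ ≤ D ^ (j + 1) := pow_le_pow_right₀ hD j.le_succ

lemma DCBoundOn.of_mapsTo_contractCoord (hU : IsOpen U) (hh : ContDiffOn ℝ ∞ h U)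
    (hfh : EqOn f (fun x => (x i - a) • h x) U) (hsU : s ⊆ U)
    (hs : ∀ t ∈ Icc (0 : ℝ) 1, MapsTo (contractCoord i a t) s s) {C : ℝ} (hC : 0 < C)
    (hM : ∀ n, M (n + 1) ≤ C ^ (n + 1) * M n) (hf : DCBoundOn M f s) : DCBoundOn M h s := by
  obtain ⟨A, B, hA, hB, hf⟩ := hf
  refine ⟨A * (B * C), B * C, by positivity, by positivity, fun x hx α => ?_⟩
  refine (norm_taylorCoeff_le_of_contractCoord hU hh hfh (fun t ht => hsU (hs t ht hx))
    fun t ht => hf _ (hs t ht hx) _).trans ?_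
  rw [sum_add_single]
  generalize ∑ k, α k = n
  calc A * B ^ (n + 1) * M (n + 1) ≤ A * B ^ (n + 1) * (C ^ (n + 1) * M n) := by
        gcongr
        exact hM n
    _ = A * (B * C) * (B * C) ^ n * M n := by ring

lemma DCBoundOn.of_le_abs_coord_sub (hU : IsOpen U) (hh : ContDiffOn ℝ ∞ h U)
    (hfh : EqOn f (fun x => (x i - a) • h x) U) (hsU : s ⊆ U) (hM : ∀ n, 0 ≤ M n)
    (hmono : Monotone M) {δ : ℝ} (hδ : 0 < δ) (hs : ∀ x ∈ s, δ ≤ |x i - a|)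
    (hf : DCBoundOn M f s) : DCBoundOn M h s := by
  obtain ⟨A, B, hA, hB, hf⟩ := hf
  exact ⟨A / δ, B + 1 / δ, by positivity, by positivity, fun x hx =>
    norm_taylorCoeff_le_of_le_abs_coord_sub hU hh hfh (hsU hx) hM hmono hδ hA.le hB.le (hs x hx)
      (hf x hx)⟩

lemma exists_nhds_dcBoundOn_of_eqOn_coord_sub_smul (hU : IsOpen U) (hh : ContDiffOn ℝ ∞ h U)
    (hfh : EqOn f (fun x => (x i - a) • h x) U) (hM : ∀ n, 0 ≤ M n) (hmono : Monotone M) {C : ℝ}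
    (hC : 0 < C) (hMC : ∀ n, M (n + 1) ≤ C ^ (n + 1) * M n)
    (hf : ∀ K ⊆ U, IsCompact K → DCBoundOn M f K) (hx : x ∈ U) :
    ∃ v ∈ 𝓝 x, DCBoundOn M h v := by
  obtain ⟨ε, hε, hball⟩ := Metric.nhds_basis_closedBall.mem_iff.1 (hU.mem_nhds hx)
  have hfball := hf _ hball (isCompact_closedBall x ε)
  have hball_nhds := Metric.closedBall_mem_nhds x hε
  rcases eq_or_ne (x i) a with hxa | hxa
  · exact ⟨_, hball_nhds, .of_mapsTo_contractCoord hU hh hfh hball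
      (fun t ht y hy => (dist_contractCoord_le ht hxa y).trans hy) hC hMC hfball⟩
  · have hxpos : 0 < |x i - a| := abs_pos.2 (sub_ne_zero.2 hxa)
    have haway : ∀ᶠ y in 𝓝 x, |x i - a| / 2 ≤ |y i - a| :=
      (contDiff_coord_sub i a).continuous.abs.continuousAt.eventually_const_le
        (half_lt_self hxpos)
    exact ⟨_, inter_mem hball_nhds haway, .of_le_abs_coord_sub hU hh hfh
      (inter_subset_left.trans hball) hM hmono (half_pos hxpos) (fun y hy => hy.2)
      (hfball.mono inter_subset_left)⟩

end DenjoyCarleman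

theorem stmt6_general {ι : Type} [Fintype ι] [DecidableEq ι] (M : ℕ → ℝ)
    (hpos : ∀ j, 0 < M j) (hmono : Monotone M)
    (hder : ∃ C : ℝ, ∀ j : ℕ, 1 ≤ j → (M (j + 1) / M j) ^ ((1 : ℝ) / j) ≤ C)
    (U : Set (EuclideanSpace ℝ ι)) (hUopen : IsOpen U)
    (f : EuclideanSpace ℝ ι → ℝ) (hf : CRM M U f) (i : ι) (a : ℝ)
    (hvanish : ∀ x ∈ U, x i = a → f x = 0) :
    ∃ h : EuclideanSpace ℝ ι → ℝ, CRM M U h ∧ ∀ x ∈ U, f x = (x i - a) * h x := by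
  obtain ⟨hsmooth, hbound⟩ := crm_iff.1 hf
  obtain ⟨C, hC, hMC⟩ := exists_succ_le_pow_mul hpos hder
  have hM (n : ℕ) : 0 ≤ M n := (hpos n).le
  have hquot : ContDiffOn ℝ ∞ (coordQuotient i a f) U :=
    contDiffOn_coordQuotient hUopen hsmooth hvanish
  have hdiv : EqOn f (fun x => (x i - a) • coordQuotient i a f x) U :=
    fun x hx => eq_coord_sub_smul_coordQuotient (hvanish x hx)
  refine ⟨coordQuotient i a f, crm_iff.2 ⟨hquot, fun K hKU hK => ?_⟩, hdiv⟩
  exact dcBoundOn_of_isCompact hM hK fun x hx =>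
    exists_nhds_dcBoundOn_of_eqOn_coord_sub_smul hUopen hquot hdiv hM hmono hC hMC hbound (hKU hx)

/-- `C^ℝ_M(U)` is closed under division by a coordinate. -/
theorem stmt6 {N : ℕ} (M : ℕ → ℝ)
    (hpos : ∀ j, 0 < M j) (hmono : Monotone M) (hM0 : M 0 = 1)
    (hlog : ∀ j : ℕ, M (j+1) / M j ≤ M (j+2) / M (j+1))
    (hgrow : Filter.Tendsto (fun j : ℕ => M j ^ ((1 : ℝ) / j)) Filter.atTop Filter.atTop)
    (hder : ∃ C : ℝ, ∀ j : ℕ, 1 ≤ j → (M (j+1) / M j) ^ ((1 : ℝ) / j) ≤ C)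
    (U : Set (EuclideanSpace ℝ (Fin N))) (hUopen : IsOpen U)
    (f : EuclideanSpace ℝ (Fin N) → ℝ) (hf : CRM M U f)
    (i : Fin N) (a : ℝ)
    (hvanish : ∀ x ∈ U, x i = a → f x = 0) :
    ∃ h : EuclideanSpace ℝ (Fin N) → ℝ, CRM M U h ∧ ∀ x ∈ U, f x = (x i - a) * h x :=
  stmt6_general M hpos hmono hder U hUopen f hf i a hvanish
end

section
/- Let M = (M_0, M_1, M_2, …) be an increasing sequence of positive real numbers with M_0 = 1 that is logarithmically convex, satisfies lim_{j→∞} (M_j)^{1/j} = ∞, and satisfies sup_{j≥1} (M_{j+1}/M_j)^{1/j} < ∞. Then C^ℝ_M is closed under inverse: let U and V be open subsets of ℝ^N and let φ = (φ_1, …, φ_N) : U → V be a map with φ_i ∈ C^ℝ_M(U) for 1 ≤ i ≤ N; let a ∈ U with φ(a) = b, and suppose the Jacobian matrix (∂φ_i/∂x_j)(a) is invertible. Then there exist open neighborhoods U′ of a and V′ of b and a mapping ψ = (ψ_1, …, ψ_N) : V′ → U′ such that ψ_i ∈ C^ℝ_M(V′) for 1 ≤ i ≤ N, ψ(b) = a,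 and φ ∘ ψ is the identity mapping on V′. -/
/-!
Let `Ψ` be the local inverse of `Φ` supplied by the inverse function theorem. The derivatives of
`Ψ` are read off along `Φ`: for `Q = (fderiv Ψ) ∘ Φ`, the pointwise inverse of `fderiv Φ`, the
chain rule reads `(fderiv g) ∘ Φ = fderiv (g ∘ Φ) * Q`, so `(D^n fderiv Ψ) ∘ Φ` arises from `Q` by
`n` rounds of differentiating and then multiplying by `Q`. Both `fderiv Φ` and `Q` have Taylor
coefficients bounded by a weight `a` with `a i * a j ≤ a (i + j)`, namely
`a j = B ^ j * M (j + 1) / M 1`, and for such weights the convolutions of the Leibniz rule are no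
worse than in the analytic case `a j = B ^ j`, where `n` rounds cost `n !` times a geometric
factor. The comparison with the coordinate definition of the class costs only factors `N ^ |α|`.
-/

section Sequences

lemma mul_le_mul_of_ratio_le_succ {M : ℕ → ℝ} (hpos : ∀ j, 0 < M j)
    (hlog : ∀ j, M (j + 1) / M j ≤ M (j + 2) / M (j + 1)) (k i j : ℕ) :
    M (i + k) * M (j + k) ≤ M k * M (i + j + k) := by
  have hratio : Monotone fun j => M (j + 1) / M j := monotone_nat_of_le_succ hlog
  induction j with
  | zero => simp [mul_comm]
  | succ j ih =>
    have hle : M (j + k + 1) / M (j + k) ≤ M (i + j + k + 1) / M (i + j + k) :=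
      hratio (by lia)
    calc M (i + k) * M (j + 1 + k)
        = M (i + k) * M (j + k) * (M (j + k + 1) / M (j + k)) := by
          have := (hpos (j + k)).ne'
          rw [show j + 1 + k = j + k + 1 by lia]
          field_simp
      _ ≤ M k * M (i + j + k) * (M (i + j + k + 1) / M (i + j + k)) :=
          mul_le_mul ih hle (div_pos (hpos _) (hpos _)).le (mul_pos (hpos _) (hpos _)).le
      _ = M k * M (i + (j + 1) + k) := by
          have := (hpos (i + j + k)).ne'
          rw [show i + (j + 1) + k = i + j + k + 1 by lia]
          field_simp

lemma le_geom_mul_of_le_convolution {u a : ℕ → ℝ} {L c : ℝ} (hL : 0 ≤ L) (hc : 0 ≤ c)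
    (ha : ∀ j, 0 ≤ a j) (hmul : ∀ i j, a i * a j ≤ a (i + j)) (h0 : u 0 ≤ L * a 0)
    (hu : ∀ j ≠ 0, u j ≤ ∑ i ∈ Finset.range j, u i * (c * a (j - i))) (j : ℕ) :
    u j ≤ L * (1 + c) ^ j * a j := by
  induction j using Nat.strong_induction_on with
  | _ j ih =>
    obtain rfl | hj := eq_or_ne j 0
    · simpa using h0
    calc u j ≤ ∑ i ∈ Finset.range j, u i * (c * a (j - i)) := hu j hj
      _ ≤ ∑ i ∈ Finset.range j, L * a j * (c * (1 + c) ^ i) := by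
          refine Finset.sum_le_sum fun i hi => ?_
          have hij : i < j := Finset.mem_range.1 hi
          calc u i * (c * a (j - i)) ≤ L * (1 + c) ^ i * a i * (c * a (j - i)) := by
                gcongr
                · exact mul_nonneg hc (ha _)
                · exact ih i hij
            _ = L * (c * (1 + c) ^ i) * (a i * a (j - i)) := by ring
            _ ≤ L * (c * (1 + c) ^ i) * a j := by
                gcongr
                exact (hmul i (j - i)).trans_eq (by rw [Nat.add_sub_cancel' hij.le])
            _ = L * a j * (c * (1 + c) ^ i) := by ring
      _ = L * a j * ((1 + c) ^ j - 1) := by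
          rw [← Finset.mul_sum, ← Finset.mul_sum, ← mul_geom_sum, add_sub_cancel_left]
      _ ≤ L * (1 + c) ^ j * a j := by
          have := mul_nonneg hL (ha j)
          linarith

lemma sum_range_succ_mul_choose (s j : ℕ) :
    ∑ i ∈ Finset.range (j + 1), (i + 1) * (s + (i + 1)).choose s =
      (s + 1) * (s + 2 + j).choose (s + 2) := by
  have hterm (i : ℕ) :
      (i + 1) * (s + (i + 1)).choose s = (s + 1) * (i + (s + 1)).choose (s + 1) := by
    have := Nat.choose_succ_right_eq (s + (i + 1)) s
    rw [Nat.add_sub_cancel_left] at this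
    rw [show i + (s + 1) = s + (i + 1) by lia]
    linarith
  simp only [hterm]
  rw [← Finset.mul_sum, Nat.sum_range_add_choose, show j + (s + 1) + 1 = s + 2 + j by lia]

end Sequences

section TaylorNorm

open Filter
open scoped Topology ContDiff Nat

variable {E F G H : Type*} [NormedAddCommGroup E] [NormedSpace ℝ E]
  [NormedAddCommGroup F] [NormedSpace ℝ F] [NormedAddCommGroup G] [NormedSpace ℝ G]
  [NormedAddCommGroup H] [NormedSpace ℝ H] {x : E}

/-- The norm of the `j`-th Taylor coefficient `D^j f(x) / j!`. With the factorial divided out, the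
Leibniz rule bounds the coefficients of a product by a plain convolution. -/
noncomputable def taylorNorm (j : ℕ) (f : E → F) (x : E) : ℝ :=
  ‖iteratedFDeriv ℝ j f x‖ / j !

lemma taylorNorm_nonneg (j : ℕ) (f : E → F) (x : E) : 0 ≤ taylorNorm j f x :=
  div_nonneg (norm_nonneg _) (Nat.cast_nonneg _)

lemma taylorNorm_zero (f : E → F) (x : E) : taylorNorm 0 f x = ‖f x‖ := by
  simp [taylorNorm]

lemma taylorNorm_congr {f g : E → F} (h : f =ᶠ[𝓝 x] g) (j : ℕ) :
    taylorNorm j f x = taylorNorm j g x := by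
  rw [taylorNorm, taylorNorm, (h.iteratedFDeriv ℝ j).eq_of_nhds]

lemma taylorNorm_fderiv (j : ℕ) (f : E → F) (x : E) :
    taylorNorm j (fderiv ℝ f) x = (j + 1) * taylorNorm (j + 1) f x := by
  rw [taylorNorm, taylorNorm, norm_iteratedFDeriv_fderiv, Nat.factorial_succ]
  push_cast
  field_simp

lemma taylorNorm_const_add {j : ℕ} (hj : j ≠ 0) (c : F) (f : E → F) (x : E) :
    taylorNorm j (fun z => c + f z) x = taylorNorm j f x := by
  obtain ⟨k, rfl⟩ := Nat.exists_eq_succ_of_ne_zero hj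
  have hfderiv : fderiv ℝ (fun z => c + f z) = fderiv ℝ f := funext fun _ => fderiv_const_add c
  simp only [taylorNorm, Nat.succ_eq_add_one, ← norm_iteratedFDeriv_fderiv, hfderiv]

lemma taylorNorm_clm_comp_le (T : F →L[ℝ] G) {f : E → F} {j : ℕ} (hf : ContDiffAt ℝ j f x) :
    taylorNorm j (fun z => T (f z)) x ≤ ‖T‖ * taylorNorm j f x := by
  rw [taylorNorm, taylorNorm, ← mul_div_assoc]
  gcongr
  exact T.norm_iteratedFDeriv_comp_left hf le_rfl

lemma taylorNorm_linearIsometryEquiv_comp (T : F ≃ₗᵢ[ℝ] G) (j : ℕ) (f : E → F) (x : E) :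
    taylorNorm j (T ∘ f) x = taylorNorm j f x := by
  rw [taylorNorm, taylorNorm, T.norm_iteratedFDeriv_comp_left]

lemma taylorNorm_sum_le {ι : Type*} (s : Finset ι) {f : ι → E → F} {j : ℕ}
    (hf : ∀ i ∈ s, ContDiffAt ℝ j (f i) x) :
    taylorNorm j (fun z => ∑ i ∈ s, f i z) x ≤ ∑ i ∈ s, taylorNorm j (f i) x := by
  simp only [taylorNorm]
  rw [iteratedFDeriv_fun_sum_apply hf, ← Finset.sum_div]
  gcongr
  exact norm_sum_le _ _

lemma taylorNorm_bilinear_le (B : F →L[ℝ] G →L[ℝ] H) (hB : ‖B‖ ≤ 1) {f : E → F} {g : E → G}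
    {j : ℕ} (hf : ContDiffAt ℝ j f x) (hg : ContDiffAt ℝ j g x) :
    taylorNorm j (fun z => B (f z) (g z)) x ≤
      ∑ i ∈ Finset.range (j + 1), taylorNorm i f x * taylorNorm (j - i) g x := by
  obtain ⟨S, hSx, hfg⟩ : ∃ S ∈ 𝓝 x, ContDiffOn ℝ j f S ∧ ContDiffOn ℝ j g S := by
    obtain ⟨S, hS, hfS⟩ := hf.contDiffOn le_rfl (by simp)
    obtain ⟨T, hT, hgT⟩ := hg.contDiffOn le_rfl (by simp)
    exact ⟨S ∩ T, inter_mem hS hT, hfS.mono Set.inter_subset_left, hgT.mono Set.inter_subset_right⟩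
  obtain ⟨U, hUS, hU, hxU⟩ := mem_nhds_iff.1 hSx
  have hleib := B.norm_iteratedFDerivWithin_le_of_bilinear_of_le_one (hfg.1.mono hUS)
    (hfg.2.mono hUS) hU.uniqueDiffOn hxU le_rfl hB
  simp only [iteratedFDerivWithin_of_isOpen _ hU hxU] at hleib
  rw [taylorNorm, div_le_iff₀ (by positivity), Finset.sum_mul]
  refine hleib.trans_eq (Finset.sum_congr rfl fun i hi => ?_)
  have hij : i ≤ j := Nat.lt_succ_iff.1 (Finset.mem_range.1 hi)
  rw [taylorNorm, taylorNorm, ← Nat.choose_mul_factorial_mul_factorial hij]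
  push_cast
  field_simp

/- `Q = Q x + Q * H` with `H z = 1 - P z * Q x` vanishing at `x`, so that the Leibniz rule computes
each Taylor coefficient of `Q` from those of lower order. -/
lemma taylorNorm_inverse_le {P : E → F →L[ℝ] G} {Q : E → G →L[ℝ] F} {a : ℕ → ℝ} {A L : ℝ}
    (hP : ContDiffAt ℝ ∞ P x) (hQ : ContDiffAt ℝ ∞ Q x)
    (hQP : ∀ᶠ z in 𝓝 x, Q z ∘L P z = .id ℝ F) (hPQ : P x ∘L Q x = .id ℝ G)
    (ha : ∀ j, 0 ≤ a j) (hmul : ∀ i j, a i * a j ≤ a (i + j)) (ha0 : a 0 = 1)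
    (hL : ‖Q x‖ ≤ L) (hPa : ∀ j, taylorNorm j P x ≤ A * a j) (j : ℕ) :
    taylorNorm j Q x ≤ L * (1 + L * A) ^ j * a j := by
  have hL0 : 0 ≤ L := (norm_nonneg _).trans hL
  have hA0 : 0 ≤ A := by simpa [ha0] using (taylorNorm_nonneg 0 P x).trans (hPa 0)
  let T : (F →L[ℝ] G) →L[ℝ] G →L[ℝ] G := -(ContinuousLinearMap.compL ℝ G F G).flip (Q x)
  let R : E → G →L[ℝ] G := fun z => .id ℝ G + T (P z)
  have hT : ‖T‖ ≤ L := by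
    calc ‖T‖ = ‖(ContinuousLinearMap.compL ℝ G F G).flip (Q x)‖ :=
          ContinuousLinearMap.opNorm_neg _
      _ ≤ 1 * ‖Q x‖ := ContinuousLinearMap.le_of_opNorm_le _
          ((ContinuousLinearMap.opNorm_flip _).trans_le
            (ContinuousLinearMap.norm_compL_le ℝ G F G)) _
      _ ≤ L := by rwa [one_mul]
  have hR : ContDiffAt ℝ ∞ R x := contDiffAt_const.add (T.contDiff.contDiffAt.comp x hP)
  have hRx : R x = 0 := by simp [R, T, hPQ]
  have hRa (i : ℕ) (hi : i ≠ 0) : taylorNorm i R x ≤ L * A * a i := by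
    rw [taylorNorm_const_add hi]
    calc _ ≤ ‖T‖ * taylorNorm i P x := taylorNorm_clm_comp_le T (hP.of_le (mod_cast le_top))
      _ ≤ L * (A * a i) := mul_le_mul hT (hPa i) (taylorNorm_nonneg i P x) hL0
      _ = L * A * a i := (mul_assoc _ _ _).symm
  have hQR : Q =ᶠ[𝓝 x] fun z => Q x + ContinuousLinearMap.compL ℝ G G F (Q z) (R z) := by
    filter_upwards [hQP] with z hz
    have : Q z ∘L (P z ∘L Q x) = Q x := by
      rw [← ContinuousLinearMap.comp_assoc, hz, ContinuousLinearMap.id_comp]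
    simp [R, T, this]
  refine le_geom_mul_of_le_convolution (u := fun j => taylorNorm j Q x) hL0
    (mul_nonneg hL0 hA0) ha hmul ?_ (fun j hj => ?_) j
  · simpa [taylorNorm_zero, ha0] using hL
  calc taylorNorm j Q x
      = taylorNorm j (fun z => ContinuousLinearMap.compL ℝ G G F (Q z) (R z)) x := by
        rw [taylorNorm_congr hQR, taylorNorm_const_add hj]
    _ ≤ ∑ i ∈ Finset.range (j + 1), taylorNorm i Q x * taylorNorm (j - i) R x :=
        taylorNorm_bilinear_le _ (ContinuousLinearMap.norm_compL_le ℝ G G F)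
          (hQ.of_le (mod_cast le_top)) (hR.of_le (mod_cast le_top))
    _ = ∑ i ∈ Finset.range j, taylorNorm i Q x * taylorNorm (j - i) R x := by
        simp [Finset.sum_range_succ, taylorNorm_zero, hRx]
    _ ≤ ∑ i ∈ Finset.range j, taylorNorm i Q x * (L * A * a (j - i)) :=
        Finset.sum_le_sum fun i hi => mul_le_mul_of_nonneg_left
          (hRa _ (Nat.sub_ne_zero_of_lt (Finset.mem_range.1 hi))) (taylorNorm_nonneg i Q x)

lemma eventually_fderiv_comp_fderiv_eq_id {f : E → F} {g : F → E} (hf : ContDiffAt ℝ 1 f x)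
    (hg : ContDiffAt ℝ 1 g (f x)) (hgf : ∀ᶠ z in 𝓝 x, g (f z) = z) :
    ∀ᶠ z in 𝓝 x, fderiv ℝ g (f z) ∘L fderiv ℝ f z = .id ℝ E := by
  filter_upwards [hf.eventually (by simp),
    hf.continuousAt.eventually (hg.eventually (by simp)), hgf.eventually_nhds] with z hfz hgz hz
  have hz' : g ∘ f =ᶠ[𝓝 z] id := hz
  rw [← fderiv_comp z (hgz.differentiableAt one_ne_zero) (hfz.differentiableAt one_ne_zero),
    hz'.fderiv_eq, fderiv_id]

lemma fderiv_comp_right_inverse_eventuallyEq {Φ : E → F} {g : F → G} {Q : E → F →L[ℝ] E}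
    (hΦ : ContDiffAt ℝ 1 Φ x) (hg : ContDiffAt ℝ 1 g (Φ x))
    (hQ : ∀ᶠ z in 𝓝 x, fderiv ℝ Φ z ∘L Q z = .id ℝ F) :
    fderiv ℝ g ∘ Φ =ᶠ[𝓝 x]
      fun z => ContinuousLinearMap.compL ℝ F E G (fderiv ℝ (g ∘ Φ) z) (Q z) := by
  filter_upwards [hΦ.eventually (by simp),
    hΦ.continuousAt.eventually (hg.eventually (by simp)), hQ] with z hΦz hgz hz
  rw [ContinuousLinearMap.compL_apply,
    fderiv_comp z (hgz.differentiableAt one_ne_zero) (hΦz.differentiableAt one_ne_zero),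
    ContinuousLinearMap.comp_assoc, hz, ContinuousLinearMap.comp_id, Function.comp_apply]

/- The numbers `(s+j).choose s` are the Taylor coefficients of `(1 - t)^{-(s+1)}`: differentiating
raises the exponent by one, and so does the multiplication by `Q`, majorized by `(1 - t)^{-1}`. -/
lemma taylorNorm_fderiv_comp_le {Φ : E → F} {g : F → G} {Q : E → F →L[ℝ] E} {a : ℕ → ℝ} {A C : ℝ}
    {s k : ℕ} (hΦ : ContDiffAt ℝ ∞ Φ x) (hg : ContDiffAt ℝ ∞ g (Φ x)) (hQ : ContDiffAt ℝ ∞ Q x)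
    (hΦQ : ∀ᶠ z in 𝓝 x, fderiv ℝ Φ z ∘L Q z = .id ℝ F)
    (ha : ∀ j, 0 ≤ a j) (hmul : ∀ i j, a i * a j ≤ a (i + j)) (hA : 0 ≤ A) (hC : 0 ≤ C)
    (hQa : ∀ j, taylorNorm j Q x ≤ C * a j)
    (hga : ∀ j, taylorNorm j (g ∘ Φ) x ≤ A * (s + j).choose s * a (k + j)) (j : ℕ) :
    taylorNorm j (fderiv ℝ g ∘ Φ) x ≤
      A * C * (s + 1) * (s + 2 + j).choose (s + 2) * a (k + 1 + j) := by
  have hgΦ : ContDiffAt ℝ ∞ (g ∘ Φ) x := hg.comp x hΦ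
  have hterm (i : ℕ) (hi : i ≤ j) :
      taylorNorm i (fderiv ℝ (g ∘ Φ)) x * taylorNorm (j - i) Q x ≤
        A * C * a (k + 1 + j) * ((i + 1) * (s + (i + 1)).choose s : ℕ) := by
    calc taylorNorm i (fderiv ℝ (g ∘ Φ)) x * taylorNorm (j - i) Q x
        ≤ (i + 1) * (A * (s + (i + 1)).choose s * a (k + (i + 1))) * (C * a (j - i)) := by
          rw [taylorNorm_fderiv]
          exact mul_le_mul (mul_le_mul_of_nonneg_left (hga _) (by positivity)) (hQa _)
            (taylorNorm_nonneg _ _ _)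
            (mul_nonneg (by positivity) (mul_nonneg (by positivity) (ha _)))
      _ = A * C * ((i + 1) * (s + (i + 1)).choose s : ℕ) *
            (a (k + (i + 1)) * a (j - i)) := by push_cast; ring
      _ ≤ A * C * ((i + 1) * (s + (i + 1)).choose s : ℕ) * a (k + 1 + j) := by
          gcongr
          exact (hmul _ _).trans_eq (by congr 1; lia)
      _ = _ := by ring
  calc taylorNorm j (fderiv ℝ g ∘ Φ) x
      = taylorNorm j
          (fun z => ContinuousLinearMap.compL ℝ F E G (fderiv ℝ (g ∘ Φ) z) (Q z)) x :=
        taylorNorm_congr (fderiv_comp_right_inverse_eventuallyEq (hΦ.of_le (by simp))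
          (hg.of_le (by simp)) hΦQ) j
    _ ≤ ∑ i ∈ Finset.range (j + 1),
          taylorNorm i (fderiv ℝ (g ∘ Φ)) x * taylorNorm (j - i) Q x :=
        taylorNorm_bilinear_le _ (ContinuousLinearMap.norm_compL_le ℝ F E G)
          (hgΦ.fderiv_right (mod_cast le_top)) (hQ.of_le (mod_cast le_top))
    _ ≤ ∑ i ∈ Finset.range (j + 1),
          A * C * a (k + 1 + j) * ((i + 1) * (s + (i + 1)).choose s : ℕ) :=
        Finset.sum_le_sum fun i hi => hterm i (Nat.lt_succ_iff.1 (Finset.mem_range.1 hi))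
    _ = A * C * (s + 1) * (s + 2 + j).choose (s + 2) * a (k + 1 + j) := by
        rw [← Finset.mul_sum, ← Nat.cast_sum, sum_range_succ_mul_choose]
        push_cast
        ring

set_option maxSynthPendingDepth 3 in
lemma taylorNorm_iteratedFDeriv_succ_comp (j k : ℕ) (g : F → G) (Φ : E → F) (x : E) :
    taylorNorm j (iteratedFDeriv ℝ (k + 1) g ∘ Φ) x =
      taylorNorm j (fderiv ℝ (iteratedFDeriv ℝ k g) ∘ Φ) x := by
  rw [iteratedFDeriv_succ_eq_comp_left, Function.comp_assoc,
    taylorNorm_linearIsometryEquiv_comp]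

lemma taylorNorm_iteratedFDeriv_comp_le {Φ : E → F} {g : F → G} {Q : E → F →L[ℝ] E} {a : ℕ → ℝ}
    {A C : ℝ} (hΦ : ContDiffAt ℝ ∞ Φ x) (hg : ContDiffAt ℝ ∞ g (Φ x)) (hQ : ContDiffAt ℝ ∞ Q x)
    (hΦQ : ∀ᶠ z in 𝓝 x, fderiv ℝ Φ z ∘L Q z = .id ℝ F)
    (ha : ∀ j, 0 ≤ a j) (hmul : ∀ i j, a i * a j ≤ a (i + j)) (hA : 0 ≤ A) (hC : 0 ≤ C)
    (hQa : ∀ j, taylorNorm j Q x ≤ C * a j) (hga : ∀ j, taylorNorm j (g ∘ Φ) x ≤ A * a j)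
    (k j : ℕ) :
    taylorNorm j (iteratedFDeriv ℝ k g ∘ Φ) x ≤
      A * (2 * C) ^ k * k ! * (2 * k + j).choose (2 * k) * a (k + j) := by
  induction k generalizing j with
  | zero =>
    rw [iteratedFDeriv_zero_eq_comp, Function.comp_assoc, taylorNorm_linearIsometryEquiv_comp]
    simpa using hga j
  | succ k ih =>
    have hk : ContDiffAt ℝ ∞ (iteratedFDeriv ℝ k g) (Φ x) :=
      hg.iteratedFDeriv_right (mod_cast le_top)
    calc taylorNorm j (iteratedFDeriv ℝ (k + 1) g ∘ Φ) x
        = taylorNorm j (fderiv ℝ (iteratedFDeriv ℝ k g) ∘ Φ) x :=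
          taylorNorm_iteratedFDeriv_succ_comp j k g Φ x
      _ ≤ A * (2 * C) ^ k * k ! * C * ((2 * k : ℕ) + 1) *
            (2 * k + 2 + j).choose (2 * k + 2) * a (k + 1 + j) :=
          taylorNorm_fderiv_comp_le hΦ hk hQ hΦQ ha hmul (by positivity) hC hQa ih j
      _ ≤ A * (2 * C) ^ k * k ! * C * (2 * (k + 1)) *
            (2 * k + 2 + j).choose (2 * k + 2) * a (k + 1 + j) := by
          gcongr
          · exact ha _
          · push_cast
            linarith
      _ = _ := by
          rw [Nat.factorial_succ, mul_add_one 2 k]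
          push_cast
          ring

lemma taylorNorm_localInverse_le {Φ : E → F} {Ψ : F → E} {a : ℕ → ℝ} {A L : ℝ}
    (hΦ : ContDiffAt ℝ ∞ Φ x) (hΨ : ContDiffAt ℝ ∞ Ψ (Φ x))
    (hleft : ∀ᶠ z in 𝓝 x, Ψ (Φ z) = z) (hright : ∀ᶠ y in 𝓝 (Φ x), Φ (Ψ y) = y)
    (ha : ∀ j, 0 ≤ a j) (hmul : ∀ i j, a i * a j ≤ a (i + j)) (ha0 : a 0 = 1)
    (hL : ‖fderiv ℝ Ψ (Φ x)‖ ≤ L) (hΦa : ∀ j, taylorNorm j (fderiv ℝ Φ) x ≤ A * a j) (n : ℕ) :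
    taylorNorm (n + 1) Ψ (Φ x) ≤ L * (2 * L * (1 + L * A)) ^ n * a n := by
  have hL0 : 0 ≤ L := (norm_nonneg _).trans hL
  have hA0 : 0 ≤ A := by simpa [ha0] using (taylorNorm_nonneg 0 _ x).trans (hΦa 0)
  have hΨ' : ContDiffAt ℝ ∞ (fderiv ℝ Ψ) (Φ x) := hΨ.fderiv_right (mod_cast le_top)
  have hQP : ∀ᶠ z in 𝓝 x, fderiv ℝ Ψ (Φ z) ∘L fderiv ℝ Φ z = .id ℝ E :=
    eventually_fderiv_comp_fderiv_eq_id (hΦ.of_le (by simp)) (hΨ.of_le (by simp)) hleft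
  have hPQ : ∀ᶠ z in 𝓝 x, fderiv ℝ Φ z ∘L fderiv ℝ Ψ (Φ z) = .id ℝ F := by
    have hΦ' : ContDiffAt ℝ ∞ Φ (Ψ (Φ x)) := by rwa [hleft.self_of_nhds]
    filter_upwards [hleft, hΦ.continuousAt.eventually (eventually_fderiv_comp_fderiv_eq_id
      (hΨ.of_le (by simp)) (hΦ'.of_le (by simp)) hright)] with z hz hz'
    rwa [hz] at hz'
  have hQ : ∀ j, taylorNorm j (fderiv ℝ Ψ ∘ Φ) x ≤ L * ((1 + L * A) ^ j * a j) := fun j =>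
    (taylorNorm_inverse_le (hΦ.fderiv_right (mod_cast le_top)) (hΨ'.comp x hΦ) hQP
      hPQ.self_of_nhds ha hmul ha0 hL hΦa j).trans_eq (mul_assoc _ _ _)
  have hiter := taylorNorm_iteratedFDeriv_comp_le (a := fun j => (1 + L * A) ^ j * a j) hΦ hΨ'
    (hΨ'.comp x hΦ) hPQ (fun j => mul_nonneg (by positivity) (ha j))
    (fun i j => by
      calc (1 + L * A) ^ i * a i * ((1 + L * A) ^ j * a j)
          = (1 + L * A) ^ (i + j) * (a i * a j) := by ring
        _ ≤ (1 + L * A) ^ (i + j) * a (i + j) := by gcongr; exact hmul i j)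
    hL0 hL0 hQ hQ n 0
  calc taylorNorm (n + 1) Ψ (Φ x) ≤ (n + 1) * taylorNorm (n + 1) Ψ (Φ x) :=
        le_mul_of_one_le_left (taylorNorm_nonneg _ _ _) (by simp)
    _ = taylorNorm n (fderiv ℝ Ψ) (Φ x) := (taylorNorm_fderiv n Ψ _).symm
    _ = taylorNorm 0 (iteratedFDeriv ℝ n (fderiv ℝ Ψ) ∘ Φ) x / n ! := by
        rw [taylorNorm_zero, taylorNorm, Function.comp_apply]
    _ ≤ L * (2 * L) ^ n * n ! * 1 * ((1 + L * A) ^ n * a n) / n ! := by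
        gcongr
        simpa using hiter
    _ = L * (2 * L * (1 + L * A)) ^ n * a n := by
        rw [mul_pow (2 * L)]
        field_simp

end TaylorNorm

section DenjoyCarleman

open Filter Set
open scoped Topology ContDiff

variable {E F : Type*} [NormedAddCommGroup E] [NormedSpace ℝ E] [NormedAddCommGroup F]
  [NormedSpace ℝ F] {M : ℕ → ℝ} {U V : Set E} {f : E → F} {x : E}

/-- The Denjoy-Carleman class `C_M(U)` for maps between normed spaces: `CRM` without coordinates,
the partial derivatives being replaced by the operator norms of the total derivatives. -/
def IsDenjoyCarleman (M : ℕ → ℝ) (U : Set E) (f : E → F) : Prop :=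
  ContDiffOn ℝ ∞ f U ∧ ∀ K ⊆ U, IsCompact K → ∃ A B : ℝ, 0 ≤ A ∧ 0 ≤ B ∧
    ∀ x ∈ K, ∀ j, taylorNorm j f x ≤ A * B ^ j * M j

lemma IsDenjoyCarleman.mono (hf : IsDenjoyCarleman M U f) (hVU : V ⊆ U) :
    IsDenjoyCarleman M V f :=
  ⟨hf.1.mono hVU, fun K hK => hf.2 K (hK.trans hVU)⟩

lemma IsDenjoyCarleman.clm_comp {G : Type*} [NormedAddCommGroup G] [NormedSpace ℝ G]
    (T : F →L[ℝ] G) (hU : IsOpen U) (hf : IsDenjoyCarleman M U f) :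
    IsDenjoyCarleman M U fun z => T (f z) := by
  refine ⟨T.contDiff.comp_contDiffOn hf.1, fun K hK hKc => ?_⟩
  obtain ⟨A, B, hA, hB, hAB⟩ := hf.2 K hK hKc
  refine ⟨‖T‖ * A, B, by positivity, hB, fun x hx j => ?_⟩
  have hfx : ContDiffAt ℝ j f x :=
    (hf.1.contDiffAt (hU.mem_nhds (hK hx))).of_le (mod_cast le_top)
  calc taylorNorm j (fun z => T (f z)) x ≤ ‖T‖ * taylorNorm j f x := taylorNorm_clm_comp_le T hfx
    _ ≤ ‖T‖ * (A * B ^ j * M j) := by gcongr; exact hAB x hx j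
    _ = ‖T‖ * A * B ^ j * M j := by ring

lemma IsDenjoyCarleman.sum {ι : Type*} {s : Finset ι} {f : ι → E → F} (hM : ∀ j, 0 ≤ M j)
    (hU : IsOpen U) (hf : ∀ i ∈ s, IsDenjoyCarleman M U (f i)) :
    IsDenjoyCarleman M U fun z => ∑ i ∈ s, f i z := by
  refine ⟨ContDiffOn.sum fun i hi => (hf i hi).1, fun K hK hKc => ?_⟩
  choose! A B hA hB hAB using fun i hi => (hf i hi).2 K hK hKc
  refine ⟨∑ i ∈ s, A i, ∑ i ∈ s, B i, Finset.sum_nonneg hA, Finset.sum_nonneg hB,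
    fun x hx j => ?_⟩
  have hfx (i : ι) (hi : i ∈ s) : ContDiffAt ℝ j (f i) x :=
    ((hf i hi).1.contDiffAt (hU.mem_nhds (hK hx))).of_le (mod_cast le_top)
  calc taylorNorm j (fun z => ∑ i ∈ s, f i z) x ≤ ∑ i ∈ s, taylorNorm j (f i) x :=
        taylorNorm_sum_le s hfx
    _ ≤ ∑ i ∈ s, A i * (∑ i ∈ s, B i) ^ j * M j := by
        refine Finset.sum_le_sum fun i hi => (hAB i hi x hx j).trans ?_
        have hMj := hM j
        have hAi := hA i hi
        have hBi := hB i hi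
        gcongr
        exact Finset.single_le_sum hB hi
    _ = (∑ i ∈ s, A i) * (∑ i ∈ s, B i) ^ j * M j := by rw [Finset.sum_mul, Finset.sum_mul]

lemma taylorNorm_localInverse_le_of_weight {Ψ : F → E} {A B L : ℝ} (hpos : ∀ j, 0 < M j)
    (hmul : ∀ i j, M (i + 1) * M (j + 1) ≤ M 1 * M (i + j + 1))
    (hf : ContDiffAt ℝ ∞ f x) (hΨ : ContDiffAt ℝ ∞ Ψ (f x))
    (hleft : ∀ᶠ z in 𝓝 x, Ψ (f z) = z) (hright : ∀ᶠ y in 𝓝 (f x), f (Ψ y) = y)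
    (hB : 0 ≤ B) (hL : ‖fderiv ℝ Ψ (f x)‖ ≤ L)
    (hfM : ∀ j, taylorNorm j f x ≤ A * B ^ j * M j) (n : ℕ) :
    taylorNorm (n + 1) Ψ (f x) ≤
      L / M 1 * (2 * L * (1 + L * (A * B * M 1)) * (2 * B)) ^ n * M (n + 1) := by
  have hM1 := hpos 1
  let a : ℕ → ℝ := fun j => (2 * B) ^ j * (M (j + 1) / M 1)
  have ha (j : ℕ) : 0 ≤ a j := mul_nonneg (by positivity) (div_pos (hpos _) hM1).le
  have ha0 : a 0 = 1 := by simp [a, hM1.ne']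
  have hamul (i j : ℕ) : a i * a j ≤ a (i + j) := by
    calc a i * a j = (2 * B) ^ (i + j) * (M (i + 1) * M (j + 1) / M 1 / M 1) := by
          simp only [a]; ring
      _ ≤ (2 * B) ^ (i + j) * (M 1 * M (i + j + 1) / M 1 / M 1) := by
          gcongr ?_ * (?_ / M 1 / M 1)
          exact hmul i j
      _ = a (i + j) := by rw [mul_div_cancel_left₀ _ hM1.ne']
  have hfa (j : ℕ) : taylorNorm j (fderiv ℝ f) x ≤ A * B * M 1 * a j := by
    have hj : (j + 1 : ℝ) ≤ 2 ^ j := mod_cast Nat.lt_two_pow_self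
    have hMj := hpos (j + 1)
    calc taylorNorm j (fderiv ℝ f) x ≤ 2 ^ j * (A * B ^ (j + 1) * M (j + 1)) := by
          rw [taylorNorm_fderiv]
          exact mul_le_mul hj (hfM _) (taylorNorm_nonneg _ _ _) (by positivity)
      _ = A * B * M 1 * a j := by
          simp only [a]
          field_simp
          ring
  refine (taylorNorm_localInverse_le hf hΨ hleft hright ha hamul ha0 hL hfa n).trans_eq ?_
  rw [mul_pow _ (2 * B)]
  simp only [a]
  ring

lemma IsDenjoyCarleman.symm {e : OpenPartialHomeomorph E F} (hpos : ∀ j, 0 < M j)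
    (hmul : ∀ i j, M (i + 1) * M (j + 1) ≤ M 1 * M (i + j + 1))
    (he : IsDenjoyCarleman M e.source e) (hsymm : ContDiffOn ℝ ∞ e.symm e.target) :
    IsDenjoyCarleman M e.target e.symm := by
  refine ⟨hsymm, fun K hK hKc => ?_⟩
  obtain ⟨A, B, hA, hB, hAB⟩ := he.2 (e.symm '' K)
    (image_subset_iff.2 fun y hy => e.map_target (hK hy))
    (hKc.image_of_continuousOn (e.continuousOn_symm.mono hK))
  obtain ⟨R, hR⟩ := hKc.exists_bound_of_continuousOn (e.continuousOn_symm.mono hK)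
  obtain ⟨L, hL⟩ := hKc.exists_bound_of_continuousOn
    ((hsymm.continuousOn_fderiv_of_isOpen e.open_target (by simp)).mono hK)
  let Q : ℝ := 2 * |L| * (1 + |L| * (A * B * M 1)) * (2 * B)
  have hM0 := hpos 0
  have hM1 := hpos 1
  refine ⟨|R| / M 0 + |L| / M 1, max Q 1, by positivity, by positivity, fun y hy j => ?_⟩
  have hxs : e.symm y ∈ e.source := e.map_target (hK hy)
  have hxy : e (e.symm y) = y := e.right_inv (hK hy)
  cases j with
  | zero =>
    calc taylorNorm 0 e.symm y ≤ |R| / M 0 * M 0 := by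
          rw [taylorNorm_zero, div_mul_cancel₀ _ hM0.ne']
          exact (hR y hy).trans (le_abs_self R)
      _ ≤ (|R| / M 0 + |L| / M 1) * max Q 1 ^ 0 * M 0 := by
          rw [pow_zero, mul_one]
          gcongr
          exact le_add_of_nonneg_right (by positivity)
  | succ n =>
    have hMn := hpos (n + 1)
    have hbound := taylorNorm_localInverse_le_of_weight (Ψ := e.symm) (L := |L|) hpos hmul
      (he.1.contDiffAt (e.open_source.mem_nhds hxs))
      (by rw [hxy]; exact hsymm.contDiffAt (e.open_target.mem_nhds (hK hy)))
      (e.eventually_left_inverse hxs) (by rw [hxy]; exact e.eventually_right_inverse (hK hy))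
      hB (by rw [hxy]; exact (hL y hy).trans (le_abs_self L))
      (hAB _ (mem_image_of_mem _ hy)) n
    rw [hxy] at hbound
    calc taylorNorm (n + 1) e.symm y ≤ |L| / M 1 * Q ^ n * M (n + 1) := hbound
      _ ≤ (|R| / M 0 + |L| / M 1) * max Q 1 ^ (n + 1) * M (n + 1) := by
          gcongr
          · exact le_add_of_nonneg_left (by positivity)
          · calc Q ^ n ≤ max Q 1 ^ n := by gcongr; exact le_max_left _ _
              _ ≤ max Q 1 ^ (n + 1) := pow_le_pow_right₀ (le_max_right _ _) n.le_succ

theorem IsDenjoyCarleman.exists_openPartialHomeomorph [CompleteSpace E] (hpos : ∀ j, 0 < M j)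
    (hmul : ∀ i j, M (i + 1) * M (j + 1) ≤ M 1 * M (i + j + 1)) (hU : IsOpen U)
    (hf : IsDenjoyCarleman M U f) {f' : E ≃L[ℝ] F} (hx : x ∈ U)
    (hf' : HasFDerivAt f (f' : E →L[ℝ] F) x) :
    ∃ e : OpenPartialHomeomorph E F, x ∈ e.source ∧ e.source ⊆ U ∧ ⇑e = f ∧
      IsDenjoyCarleman M e.target e.symm := by
  have hfx : ContDiffAt ℝ ∞ f x := hf.1.contDiffAt (hU.mem_nhds hx)
  let e₀ := hfx.toOpenPartialHomeomorph f hf' (by simp)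
  have hS : IsOpen (U ∩ fderiv ℝ f ⁻¹' range ((↑) : (E ≃L[ℝ] F) → E →L[ℝ] F)) :=
    (hf.1.continuousOn_fderiv_of_isOpen hU (by simp)).isOpen_inter_preimage hU
      (ContinuousLinearEquiv.isOpen (𝕜 := ℝ))
  let e := e₀.restrOpen _ hS
  have heU : e.source ⊆ U := fun z hz => hz.2.1
  refine ⟨e, ⟨hfx.mem_toOpenPartialHomeomorph_source hf' (by simp), hx, f', hf'.fderiv.symm⟩,
    heU, rfl, (hf.mono heU).symm hpos hmul fun y hy => ?_⟩
  obtain ⟨-, hzU, g', hg'⟩ := e.map_target hy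
  have hfz : ContDiffAt ℝ ∞ f (e.symm y) := hf.1.contDiffAt (hU.mem_nhds hzU)
  refine (e.contDiffAt_symm (f₀' := g') hy ?_ hfz).contDiffWithinAt
  rw [hg']
  exact (hfz.differentiableAt (by simp)).hasFDerivAt

end DenjoyCarleman

section PartialDerivatives

open Filter
open scoped Topology ContDiff Nat

variable {ι : Type} [Fintype ι]

lemma norm_euclideanSpace_proj_le_one (i : ι) :
    ‖(EuclideanSpace.proj i : EuclideanSpace ℝ ι →L[ℝ] ℝ)‖ ≤ 1 :=
  ContinuousLinearMap.opNorm_le_bound _ zero_le_one fun v => by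
    simpa using PiLp.norm_apply_le v i

/-- The list of coordinates in which `i` occurs `α i` times, turning the multi-index derivative
`mderiv α` into a `pdList`. -/
noncomputable def multiIndexList (α : ι → ℕ) : List ι :=
  (Finset.univ : Finset ι).toList.flatMap fun i => List.replicate (α i) i

lemma length_multiIndexList (α : ι → ℕ) : (multiIndexList α).length = ∑ i, α i := by
  simp [multiIndexList, List.length_flatMap]

lemma multinomial_le_card_pow (α : ι → ℕ) :
    Nat.multinomial Finset.univ α ≤ Fintype.card ι ^ ∑ i, α i := by
  classical
  have h := Finset.sum_pow_eq_sum_piAntidiag (R := ℕ) Finset.univ (fun _ : ι => 1) (∑ i, α i)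
  simp only [one_pow, Finset.prod_const_one, mul_one, Finset.sum_const, Finset.card_univ,
    smul_eq_mul] at h
  rw [h]
  exact Finset.single_le_sum (f := fun k => Nat.multinomial Finset.univ k)
    (fun _ _ => Nat.zero_le _) (by simp)

variable [DecidableEq ι] {W : Type} [NormedAddCommGroup W] [NormedSpace ℝ W]
  {f g : EuclideanSpace ℝ ι → W} {x : EuclideanSpace ℝ ι}

lemma pd_congr (h : f =ᶠ[𝓝 x] g) (i : ι) : pd i f =ᶠ[𝓝 x] pd i g := by
  filter_upwards [h.fderiv (𝕜 := ℝ)] with z hz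
  rw [pd, pd, hz]

lemma contDiffAt_pd (hf : ContDiffAt ℝ ∞ f x) (i : ι) : ContDiffAt ℝ ∞ (pd i f) x :=
  (hf.fderiv_right (mod_cast le_top)).clm_apply contDiffAt_const

lemma pd_comm (hf : ContDiffAt ℝ 2 f x) (i j : ι) : pd i (pd j f) x = pd j (pd i f) x := by
  have hd : DifferentiableAt ℝ (fderiv ℝ f) x :=
    (hf.fderiv_right (m := 1) (by norm_num)).differentiableAt one_ne_zero
  have hpd (i j : ι) : pd i (pd j f) x =
      fderiv ℝ (fderiv ℝ f) x (EuclideanSpace.single i 1) (EuclideanSpace.single j 1) := by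
    have hpdj : HasFDerivAt (pd j f) _ x :=
      hd.hasFDerivAt.clm_apply (hasFDerivAt_const (EuclideanSpace.single j (1 : ℝ)) x)
    simp [pd, hpdj.fderiv]
  rw [hpd, hpd]
  exact hf.isSymmSndFDerivAt (by simp) _ _

/-- The iterated partial derivative along a list of coordinates; the last entry of the list is
differentiated first. -/
noncomputable def pdList (l : List ι) (f : EuclideanSpace ℝ ι → W) : EuclideanSpace ℝ ι → W :=
  l.foldr pd f

lemma pdList_concat (l : List ι) (i : ι) (f : EuclideanSpace ℝ ι → W) :
    pdList (l ++ [i]) f = pdList l (pd i f) := by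
  simp [pdList]

lemma contDiffAt_pdList (hf : ContDiffAt ℝ ∞ f x) (l : List ι) :
    ContDiffAt ℝ ∞ (pdList l f) x := by
  induction l with
  | nil => exact hf
  | cons i l ih => exact contDiffAt_pd ih i

lemma pdList_perm (hf : ContDiffAt ℝ ∞ f x) {l l' : List ι} (h : l.Perm l') :
    pdList l f =ᶠ[𝓝 x] pdList l' f := by
  induction h with
  | nil => exact .rfl
  | cons i _ ih => exact pd_congr ih i
  | swap i j l =>
    have h2 : ContDiffAt ℝ 2 (pdList l f) x := (contDiffAt_pdList hf l).of_le
      (WithTop.coe_le_coe.2 (le_top : (2 : ℕ∞) ≤ ⊤))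
    exact (h2.eventually (by simp)).mono fun z hz => pd_comm hz j i
  | trans _ _ ih ih' => exact ih.trans ih'

lemma norm_pdList_le (hf : ContDiffAt ℝ ∞ f x) (l : List ι) :
    ‖pdList l f x‖ ≤ ‖iteratedFDeriv ℝ l.length f x‖ := by
  induction l using List.reverseRecOn generalizing f with
  | nil => simp [pdList]
  | append_singleton l i ih =>
    calc ‖pdList (l ++ [i]) f x‖ ≤ ‖iteratedFDeriv ℝ l.length (pd i f) x‖ := by
          rw [pdList_concat]
          exact ih (contDiffAt_pd hf i)
      _ ≤ ‖EuclideanSpace.single i (1 : ℝ)‖ * ‖iteratedFDeriv ℝ l.length (fderiv ℝ f) x‖ :=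
          norm_iteratedFDeriv_clm_apply_const (hf.fderiv_right (m := ∞) (mod_cast le_top))
            (mod_cast le_top)
      _ = ‖iteratedFDeriv ℝ (l ++ [i]).length f x‖ := by
          have hlength : (l ++ [i]).length = l.length + 1 := List.length_append
          rw [PiLp.norm_single, norm_one, one_mul, norm_iteratedFDeriv_fderiv, hlength]

lemma fderiv_eq_sum_smulRight_pd (f : EuclideanSpace ℝ ι → W) :
    fderiv ℝ f = fun z => ∑ i, ContinuousLinearMap.smulRightL ℝ (EuclideanSpace ℝ ι) W
      (EuclideanSpace.proj i) (pd i f z) := by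
  ext z v
  have hv : v = ∑ i, v i • EuclideanSpace.single i (1 : ℝ) := by
    ext i
    simp [Pi.single_apply]
  conv_lhs => rw [hv, map_sum]
  simp [pd]

lemma norm_iteratedFDeriv_le_of_norm_pdList_le (hf : ContDiffAt ℝ ∞ f x) {k : ℕ} {c : ℝ}
    (h : ∀ l : List ι, l.length = k → ‖pdList l f x‖ ≤ c) :
    ‖iteratedFDeriv ℝ k f x‖ ≤ Fintype.card ι ^ k * c := by
  induction k generalizing f with
  | zero => simpa [pdList] using h [] rfl
  | succ k ih =>
    let T (i : ι) : W →L[ℝ] EuclideanSpace ℝ ι →L[ℝ] W :=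
      ContinuousLinearMap.smulRightL ℝ (EuclideanSpace ℝ ι) W (EuclideanSpace.proj i)
    have hT (i : ι) : ‖T i‖ ≤ 1 :=
      (ContinuousLinearMap.le_of_opNorm_le _
        ContinuousLinearMap.norm_smulRightL_le _).trans
        ((one_mul _).trans_le (norm_euclideanSpace_proj_le_one i))
    have hsum : fderiv ℝ f = fun z => ∑ i, T i (pd i f z) := fderiv_eq_sum_smulRight_pd f
    have hpd (i : ι) : ContDiffAt ℝ k (pd i f) x := (contDiffAt_pd hf i).of_le (mod_cast le_top)
    have hTpd (i : ι) : ContDiffAt ℝ k (fun z => T i (pd i f z)) x :=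
      (T i).contDiff.contDiffAt.comp x (hpd i)
    calc ‖iteratedFDeriv ℝ (k + 1) f x‖
        = ‖∑ i, iteratedFDeriv ℝ k (fun z => T i (pd i f z)) x‖ := by
          rw [← norm_iteratedFDeriv_fderiv, hsum, iteratedFDeriv_fun_sum_apply fun i _ => hTpd i]
      _ ≤ ∑ i, ‖iteratedFDeriv ℝ k (pd i f) x‖ := by
          refine norm_sum_le_of_le _ fun i _ => ?_
          refine ((T i).norm_iteratedFDeriv_comp_left (hpd i) le_rfl).trans ?_
          exact mul_le_of_le_one_left (norm_nonneg _) (hT i)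
      _ ≤ ∑ _i : ι, Fintype.card ι ^ k * c := by
          refine Finset.sum_le_sum fun i _ => ih (contDiffAt_pd hf i) fun l hl => ?_
          rw [← pdList_concat]
          exact h _ (by simp [hl])
      _ = Fintype.card ι ^ (k + 1) * c := by
          simp only [Finset.sum_const, Finset.card_univ, nsmul_eq_mul]
          ring

lemma mderiv_eq_pdList (α : ι → ℕ) (f : EuclideanSpace ℝ ι → W) :
    mderiv α f = pdList (multiIndexList α) f := by
  have hreplicate (i : ι) (n : ℕ) (g : EuclideanSpace ℝ ι → W) :
      (pd i)^[n] g = (List.replicate n i).foldr pd g := by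
    induction n with
    | zero => rfl
    | succ n ih => rw [Function.iterate_succ_apply', ih, List.replicate_succ, List.foldr_cons]
  simp only [mderiv, pdList, multiIndexList, List.foldr_flatMap, hreplicate]

lemma count_multiIndexList (α : ι → ℕ) (i : ι) : (multiIndexList α).count i = α i := by
  simp [multiIndexList, List.count_flatMap, Function.comp_def, List.count_replicate,
    Finset.sum_map_toList]

lemma multiIndexList_count_perm (l : List ι) : (multiIndexList fun i => l.count i).Perm l :=
  List.perm_iff_count.2 fun i => count_multiIndexList _ i

lemma one_div_factorial_mul_norm_mderiv_le (hf : ContDiffAt ℝ ∞ f x) (α : ι → ℕ) :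
    1 / (∏ i, ((α i)! : ℝ)) * ‖mderiv α f x‖ ≤
      Fintype.card ι ^ (∑ i, α i) * taylorNorm (∑ i, α i) f x := by
  have hderiv : ‖mderiv α f x‖ ≤ ‖iteratedFDeriv ℝ (∑ i, α i) f x‖ := by
    rw [mderiv_eq_pdList, ← length_multiIndexList α]
    exact norm_pdList_le hf _
  have hfac : ((∑ i, α i)! : ℝ) ≤ (∏ i, ((α i)! : ℝ)) * Fintype.card ι ^ ∑ i, α i := by
    rw [← Nat.multinomial_spec Finset.univ α]
    push_cast
    gcongr
    exact_mod_cast multinomial_le_card_pow α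
  have hprod : (0 : ℝ) < ∏ i, ((α i)! : ℝ) := Finset.prod_pos fun i _ => by positivity
  rw [taylorNorm, one_div_mul_eq_div, ← mul_div_assoc, div_le_div_iff₀ hprod (by positivity)]
  calc ‖mderiv α f x‖ * (∑ i, α i)!
      ≤ ‖iteratedFDeriv ℝ (∑ i, α i) f x‖ * ((∏ i, ((α i)! : ℝ)) * Fintype.card ι ^ ∑ i, α i) := by
        gcongr
    _ = _ := by ring

lemma taylorNorm_le_of_norm_mderiv_le (hf : ContDiffAt ℝ ∞ f x) {k : ℕ} {c : ℝ}
    (h : ∀ α : ι → ℕ, ∑ i, α i = k → 1 / (∏ i, ((α i)! : ℝ)) * ‖mderiv α f x‖ ≤ c) :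
    taylorNorm k f x ≤ Fintype.card ι ^ k * c := by
  rw [taylorNorm, div_le_iff₀ (by positivity), mul_assoc]
  refine norm_iteratedFDeriv_le_of_norm_pdList_le hf fun l hl => ?_
  let α : ι → ℕ := fun i => l.count i
  have hα : ∑ i, α i = k := by
    rw [← length_multiIndexList, (multiIndexList_count_perm l).length_eq, hl]
  have hprod : (0 : ℝ) < ∏ i, ((α i)! : ℝ) := Finset.prod_pos fun i _ => by positivity
  have hc : 0 ≤ c := le_trans (by positivity) (h α hα)
  have hfac : ∏ i, ((α i)! : ℝ) ≤ k ! := by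
    rw [← hα]
    exact_mod_cast Nat.le_of_dvd (Nat.factorial_pos _)
      (Nat.prod_factorial_dvd_factorial_sum Finset.univ α)
  calc ‖pdList l f x‖ = ‖mderiv α f x‖ := by
        rw [mderiv_eq_pdList, (pdList_perm hf (multiIndexList_count_perm l)).eq_of_nhds]
    _ ≤ c * ∏ i, ((α i)! : ℝ) := by
        rw [← div_le_iff₀ hprod, ← one_div_mul_eq_div]
        exact h α hα
    _ ≤ c * k ! := by gcongr

end PartialDerivatives

section CoordinateDescription

open scoped ContDiff

variable {ι : Type} [Fintype ι] {M : ℕ → ℝ}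

lemma isDenjoyCarleman_euclidean {E : Type*} [NormedAddCommGroup E] [NormedSpace ℝ E] {U : Set E}
    {f : E → EuclideanSpace ℝ ι} (hM : ∀ j, 0 ≤ M j) (hU : IsOpen U) :
    IsDenjoyCarleman M U f ↔ ∀ i, IsDenjoyCarleman M U fun x => f x i := by
  classical
  refine ⟨fun hf i => hf.clm_comp (EuclideanSpace.proj i) hU, fun hf => ?_⟩
  have hsum : f = fun x => ∑ i, ContinuousLinearMap.toSpanSingleton ℝ
      (EuclideanSpace.single i (1 : ℝ)) (f x i) := by
    ext x i
    simp [Pi.single_apply]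
  rw [hsum]
  exact .sum hM hU fun i _ => (hf i).clm_comp _ hU

variable [DecidableEq ι]

lemma crm_iff_isDenjoyCarleman {U : Set (EuclideanSpace ℝ ι)} {f : EuclideanSpace ℝ ι → ℝ}
    (hM : ∀ j, 0 ≤ M j) (hU : IsOpen U) :
    CRM M U f ↔ IsDenjoyCarleman M U f := by
  refine and_congr_right fun hf => forall₃_congr fun K hK _ => ?_
  have hfx {x} (hx : x ∈ K) : ContDiffAt ℝ ∞ f x := hf.contDiffAt (hU.mem_nhds (hK hx))
  constructor
  · rintro ⟨A, B, hA, hB, hAB⟩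
    refine ⟨A, Fintype.card ι * B, hA.le, by positivity, fun x hx j => ?_⟩
    refine (taylorNorm_le_of_norm_mderiv_le (c := A * B ^ j * M j) (hfx hx) ?_).trans_eq (by ring)
    rintro α rfl
    exact hAB x hx α
  · rintro ⟨A, B, hA, hB, hAB⟩
    refine ⟨A + 1, Fintype.card ι * B + 1, by positivity, by positivity, fun x hx α => ?_⟩
    set n := ∑ i, α i
    have hMn := hM n
    calc _ ≤ Fintype.card ι ^ n * taylorNorm n f x :=
          one_div_factorial_mul_norm_mderiv_le (hfx hx) α
      _ ≤ Fintype.card ι ^ n * (A * B ^ n * M n) := by gcongr; exact hAB x hx n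
      _ = A * (Fintype.card ι * B) ^ n * M n := by ring
      _ ≤ (A + 1) * (Fintype.card ι * B + 1) ^ n * M n := by gcongr <;> linarith

lemma det_fderiv_eq_det_pd {Φ : EuclideanSpace ℝ ι → EuclideanSpace ℝ ι} {a : EuclideanSpace ℝ ι}
    (hΦ : DifferentiableAt ℝ Φ a) :
    (fderiv ℝ Φ a).det = (Matrix.of fun i j => pd j (fun x => Φ x i) a).det := by
  have hcoord (i : ι) : HasFDerivAt (fun x => Φ x i)
      ((EuclideanSpace.proj i : EuclideanSpace ℝ ι →L[ℝ] ℝ) ∘L fderiv ℝ Φ a) a :=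
    (EuclideanSpace.proj i : EuclideanSpace ℝ ι →L[ℝ] ℝ).hasFDerivAt.comp a hΦ.hasFDerivAt
  rw [ContinuousLinearMap.det,
    ← LinearMap.det_toMatrix (EuclideanSpace.basisFun ι ℝ).toBasis]
  congr 1
  ext i j
  simp [LinearMap.toMatrix_apply, pd, (hcoord i).fderiv]

end CoordinateDescription

theorem stmt7_general {ι : Type} [Fintype ι] [DecidableEq ι] (M : ℕ → ℝ) (hpos : ∀ j, 0 < M j)
    (hmul : ∀ i j, M (i + 1) * M (j + 1) ≤ M 1 * M (i + j + 1))
    (U V : Set (EuclideanSpace ℝ ι)) (hUopen : IsOpen U)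
    (φ : ι → EuclideanSpace ℝ ι → ℝ) (hφ : ∀ i, CRM M U (φ i))
    (Φ : EuclideanSpace ℝ ι → EuclideanSpace ℝ ι) (hΦ : ∀ x i, Φ x i = φ i x)
    (hmaps : Set.MapsTo Φ U V) (a b : EuclideanSpace ℝ ι) (ha : a ∈ U) (hab : Φ a = b)
    (hjac : IsUnit (Matrix.of (fun i j => pd j (φ i) a) : Matrix ι ι ℝ)) :
    ∃ U' V' : Set (EuclideanSpace ℝ ι),
      IsOpen U' ∧ IsOpen V' ∧ a ∈ U' ∧ b ∈ V' ∧ U' ⊆ U ∧ V' ⊆ V ∧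
      ∃ ψ : ι → EuclideanSpace ℝ ι → ℝ, ∃ Ψ : EuclideanSpace ℝ ι → EuclideanSpace ℝ ι,
        (∀ y i, Ψ y i = ψ i y) ∧ (∀ i, CRM M V' (ψ i)) ∧ Ψ b = a ∧
        Set.MapsTo Ψ V' U' ∧ ∀ y ∈ V', Φ (Ψ y) = y := by
  obtain rfl : φ = fun i x => Φ x i := funext₂ fun i x => (hΦ x i).symm
  have hM (j : ℕ) : 0 ≤ M j := (hpos j).le
  have hclass : IsDenjoyCarleman M U Φ := (isDenjoyCarleman_euclidean hM hUopen).2 fun i =>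
    (crm_iff_isDenjoyCarleman hM hUopen).1 (hφ i)
  have hdiff : DifferentiableAt ℝ Φ a :=
    (hclass.1.contDiffAt (hUopen.mem_nhds ha)).differentiableAt (by simp)
  have hdet : (fderiv ℝ Φ a).det ≠ 0 := by
    rw [det_fderiv_eq_det_pd hdiff]
    exact ((Matrix.isUnit_iff_isUnit_det _).1 hjac).ne_zero
  obtain ⟨e, hae, heU, rfl, hsymm⟩ := hclass.exists_openPartialHomeomorph hpos hmul hUopen
    (f' := (fderiv ℝ Φ a).toContinuousLinearEquivOfDetNeZero hdet) ha
    (by simpa using hdiff.hasFDerivAt)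
  subst hab
  refine ⟨e.source, e.target, e.open_source, e.open_target, hae, e.map_source hae, heU,
    fun y hy => ?_, fun i y => e.symm y i, e.symm, fun _ _ => rfl, fun i => ?_,
    e.left_inv hae, fun _ hy => e.map_target hy, fun _ hy => e.right_inv hy⟩
  · rw [← e.right_inv hy]
    exact hmaps (heU (e.map_target hy))
  · exact (crm_iff_isDenjoyCarleman hM e.open_target).2
      ((isDenjoyCarleman_euclidean hM e.open_target).1 hsymm i)

/-- `C^ℝ_M` is closed under inverse (inverse function theorem in the class). -/
theorem stmt7 {N : ℕ} (M : ℕ → ℝ)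
    (hpos : ∀ j, 0 < M j) (hmono : Monotone M) (hM0 : M 0 = 1)
    (hlog : ∀ j : ℕ, M (j+1) / M j ≤ M (j+2) / M (j+1))
    (hgrow : Filter.Tendsto (fun j : ℕ => M j ^ ((1 : ℝ) / j)) Filter.atTop Filter.atTop)
    (hder : ∃ C : ℝ, ∀ j : ℕ, 1 ≤ j → (M (j+1) / M j) ^ ((1 : ℝ) / j) ≤ C)
    (U V : Set (EuclideanSpace ℝ (Fin N))) (hUopen : IsOpen U) (hVopen : IsOpen V)
    (φ : Fin N → EuclideanSpace ℝ (Fin N) → ℝ) (hφ : ∀ i, CRM M U (φ i))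
    (Φ : EuclideanSpace ℝ (Fin N) → EuclideanSpace ℝ (Fin N))
    (hΦ : ∀ x i, Φ x i = φ i x)
    (hmaps : Set.MapsTo Φ U V)
    (a b : EuclideanSpace ℝ (Fin N)) (ha : a ∈ U) (hab : Φ a = b)
    (hjac : IsUnit (Matrix.of (fun i j => pd j (φ i) a) : Matrix (Fin N) (Fin N) ℝ)) :
    ∃ U' V' : Set (EuclideanSpace ℝ (Fin N)),
      IsOpen U' ∧ IsOpen V' ∧ a ∈ U' ∧ b ∈ V' ∧ U' ⊆ U ∧ V' ⊆ V ∧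
      ∃ ψ : Fin N → EuclideanSpace ℝ (Fin N) → ℝ,
        ∃ Ψ : EuclideanSpace ℝ (Fin N) → EuclideanSpace ℝ (Fin N),
          (∀ y i, Ψ y i = ψ i y) ∧ (∀ i, CRM M V' (ψ i)) ∧ Ψ b = a ∧
          Set.MapsTo Ψ V' U' ∧ ∀ y ∈ V', Φ (Ψ y) = y :=
  stmt7_general M hpos (mul_le_mul_of_ratio_le_succ hpos hlog 1) U V hUopen φ hφ Φ hΦ hmaps a b
    ha hab hjac
end
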